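/- arXiv:2306.09146 — 4 statements merged into one kernel-verified Lean document; each statement's English description precedes it below -/
import Mathlib

section
/- Let G be a basic CUH graph in which both D and D̃ are realized, and let ℓ be a positive natural number with ℓ ≤ ω_R. Then both the join of a single blue vertex with a red ℓ-clique (the blue vertex adjacent to all ℓ red vertices) and the disjoint union of a single blue vertex with a red ℓ-clique (the blue vertex adjacent to no red vertex) are realized in G. -/
open SimpleGraph

/-- A partial colored isomorphism of the 2-colored graph `(G, red)`, defined on the set `S`:
an injective map preserving colors and adjacency on `S`. -/
def IsPartialIso {V : Type} (G : SimpleGraph V) (red : V → Prop) (S : Set V) (f : V → V) :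
    Prop :=
  Set.InjOn f S ∧ (∀ v ∈ S, (red (f v) ↔ red v)) ∧
    ∀ u ∈ S, ∀ v ∈ S, (G.Adj (f u) (f v) ↔ G.Adj u v)

/-- A 2-colored graph is ultrahomogeneous if every isomorphism between two finite induced
colored subgraphs extends to a color-preserving automorphism. -/
def Ultrahomogeneous {V : Type} (G : SimpleGraph V) (red : V → Prop) : Prop :=
  ∀ S : Set V, S.Finite → ∀ f : V → V, IsPartialIso G red S f →
    ∃ ψ : G ≃g G, (∀ v, red (ψ v) ↔ red v) ∧ ∀ v ∈ S, ψ v = f v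

/-- The set `P` induces a disjoint union of cliques in `G` (no induced monochromatic `P₃`). -/
def IsUnionOfCliques {V : Type} (G : SimpleGraph V) (P : Set V) : Prop :=
  ∀ u ∈ P, ∀ v ∈ P, ∀ w ∈ P, G.Adj u v → G.Adj v w → u ≠ w → G.Adj u w

/-- `M` is an inclusion-wise maximal clique of the subgraph of `G` induced on `P`. -/
def IsMaxCliqueIn {V : Type} (G : SimpleGraph V) (P : Set V) (M : Set V) : Prop :=
  M ⊆ P ∧ G.IsClique M ∧ ∀ M' : Set V, M' ⊆ P → G.IsClique M' → M ⊆ M' → M = M'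

/-- `S` is an independent set in `G`. -/
def IsIndepIn {V : Type} (G : SimpleGraph V) (S : Set V) : Prop :=
  ∀ u ∈ S, ∀ v ∈ S, ¬ G.Adj u v

/-- The 2-colored graph `(H, redH)` is realized in `(G, red)`, i.e. isomorphic to an
induced colored subgraph of `G`. -/
def Realizes {V : Type} (G : SimpleGraph V) (red : V → Prop) {W : Type} (H : SimpleGraph W)
    (redH : W → Prop) : Prop :=
  ∃ f : W → V, Function.Injective f ∧ (∀ w, red (f w) ↔ redH w) ∧
    ∀ u w : W, G.Adj (f u) (f w) ↔ H.Adj u w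

/-- `(H, redH)` is minimally omitted in `(G, red)`: it is omitted, but every proper induced
subgraph of it is realized. -/
def MinOmitted {V : Type} (G : SimpleGraph V) (red : V → Prop) {W : Type} (H : SimpleGraph W)
    (redH : W → Prop) : Prop :=
  ¬ Realizes G red H redH ∧
    ∀ S : Set W, S ≠ Set.univ → Realizes G red (H.induce S) (fun x => redH x.1)

/-- Isomorphism of 2-colored graphs. -/
def ColoredIso {V : Type} (G : SimpleGraph V) (red : V → Prop) {W : Type} (H : SimpleGraph W)
    (redH : W → Prop) : Prop :=
  ∃ e : G ≃g H, ∀ v, red v ↔ redH (e v)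

/-- The graph obtained from `G` by complementing the cross edges while keeping the
edges inside each color class. -/
def crossComp {V : Type} (G : SimpleGraph V) (red : V → Prop) : SimpleGraph V :=
  SimpleGraph.fromRel (fun u v =>
    ((red u ↔ red v) ∧ G.Adj u v) ∨ (¬ (red u ↔ red v) ∧ ¬ G.Adj u v))

/-- The blow-up of the 2-colored graph `(H, redH)` (whose red class should be independent),
replacing every red vertex by a copy of `I` forming a clique, joined to the neighbors of the
original vertex. -/
def blowUp {V : Type} (H : SimpleGraph V) (redH : V → Prop) (I : Type) :
    SimpleGraph ({v : V // redH v} × I ⊕ {v : V // ¬ redH v}) :=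
  SimpleGraph.fromRel (fun x y =>
    match x, y with
    | Sum.inl (u, i), Sum.inl (u', i') => H.Adj u.1 u'.1 ∨ (u = u' ∧ i ≠ i')
    | Sum.inl (u, _), Sum.inr b => H.Adj u.1 b.1
    | Sum.inr b, Sum.inl (u, _) => H.Adj b.1 u.1
    | Sum.inr b, Sum.inr b' => H.Adj b.1 b'.1)

/-- The coloring of the blow-up: all vertices replacing red vertices are red. -/
def blowUpRed (V : Type) (redH : V → Prop) (I : Type) :
    ({v : V // redH v} × I ⊕ {v : V // ¬ redH v}) → Prop :=
  Sum.elim (fun _ => True) (fun _ => False)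

/-- `(G, red)` is a blow-up with the red class blown up: it is isomorphic (as a colored graph)
to the blow-up of some `(H, redH)` with independent red class by an `i`-clique, `2 ≤ i ≤ ℵ₀`. -/
def IsBlowUpOf {V : Type} (G : SimpleGraph V) (red : V → Prop) : Prop :=
  ∃ (U : Type) (H : SimpleGraph U) (redH : U → Prop) (I : Type),
    (∀ u v : U, redH u → redH v → ¬ H.Adj u v) ∧
    2 ≤ Cardinal.mk I ∧ Cardinal.mk I ≤ Cardinal.aleph0 ∧
    ∃ e : G ≃g blowUp H redH I, ∀ v, red v ↔ blowUpRed U redH I (e v)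

/-- `(G, red)` is a blow-up (of one of its two color classes). -/
def IsBlowUp {V : Type} (G : SimpleGraph V) (red : V → Prop) : Prop :=
  IsBlowUpOf G red ∨ IsBlowUpOf G (fun v => ¬ red v)

/-- A CUH graph: a countably infinite ultrahomogeneous 2-colored graph in which both
color classes induce disjoint unions of cliques. -/
def IsCUH {V : Type} (G : SimpleGraph V) (red : V → Prop) : Prop :=
  Countable V ∧ Infinite V ∧ Ultrahomogeneous G red ∧
    IsUnionOfCliques G {v | red v} ∧ IsUnionOfCliques G {v | ¬ red v}

/-- A basic CUH graph: a CUH graph which is not a blow-up and where both independence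
numbers are at least 2. -/
def IsBasicCUH {V : Type} (G : SimpleGraph V) (red : V → Prop) : Prop :=
  IsCUH G red ∧ ¬ IsBlowUp G red ∧
    (∃ u v, red u ∧ red v ∧ u ≠ v ∧ ¬ G.Adj u v) ∧
    (∃ u v, ¬ red u ∧ ¬ red v ∧ u ≠ v ∧ ¬ G.Adj u v)

/-- The graph `D`: red vertices `0, 1`, blue vertices `2, 3`, edges
`{01, 23, 02, 03, 12}` (a 2-colored diamond). -/
def Dgraph : SimpleGraph (Fin 4) :=
  SimpleGraph.fromRel (fun x y =>
    (x = 0 ∧ y = 1) ∨ (x = 2 ∧ y = 3) ∨ (x = 0 ∧ y = 2) ∨ (x = 0 ∧ y = 3) ∨ (x = 1 ∧ y = 2))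

/-- The coloring of `D` and `D̃`: `0, 1` are red, `2, 3` are blue. -/
def Dred : Fin 4 → Prop := fun x => x = 0 ∨ x = 1

/-- The graph `D̃`, the cross-edge complement of `D`: the path `0 – 1 – 3 – 2`. -/
def Dtilde : SimpleGraph (Fin 4) :=
  SimpleGraph.fromRel (fun x y => (x = 0 ∧ y = 1) ∨ (x = 1 ∧ y = 3) ∨ (x = 3 ∧ y = 2))

/-- `T_r`: the triangle with two red vertices and one blue vertex. -/
def Tr : SimpleGraph (Fin 3) := ⊤

/-- The coloring of `T_r` and `T̃_r`: `0, 1` red, `2` blue. -/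
def TrRed : Fin 3 → Prop := fun x => x = 0 ∨ x = 1

/-- `T̃_r`: a red edge together with an isolated blue vertex. -/
def TrTilde : SimpleGraph (Fin 3) := SimpleGraph.fromRel (fun x y => x = 0 ∧ y = 1)

/-- `T_b`: the triangle with one red vertex and two blue vertices. -/
def Tb : SimpleGraph (Fin 3) := ⊤

/-- The coloring of `T_b` and `T̃_b`: `0` red, `1, 2` blue. -/
def TbRed : Fin 3 → Prop := fun x => x = 0

/-- `T̃_b`: a blue edge together with an isolated red vertex. -/
def TbTilde : SimpleGraph (Fin 3) := SimpleGraph.fromRel (fun x y => x = 1 ∧ y = 2)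

/-!
Fix an adjacent pair `b`, `b₀` of blue vertices and a maximal red clique `K`. Suppose that all four
adjacency patterns to `(b, b₀)` occur in `K` but `b` has only finitely many neighbors there.
Exchanging vertices of `K` that look alike to `b₀` moves `b` to `b'`, losing exactly one neighbor
`c` in `K`, and to `b''`, losing `c` and at least one more. But `(b, b', c)` and `(b, b'', c)` are
conjugate, a contradiction. `D̃` provides a pair and a clique in which the patterns (no, no) and
(no, yes) occur, `D` supplies (yes, yes), and a count then forces (yes, no). So some blue vertex is
joined to an infinite red clique; for the other half, cross-edge complementation exchanges `D` and
`D̃`.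
-/

section CrossComplement

variable {V W : Type} {G : SimpleGraph V} {red : V → Prop} {H : SimpleGraph W} {redH : W → Prop}

lemma crossComp_adj_of_iff {u v : V} (h : red u ↔ red v) :
    (crossComp G red).Adj u v ↔ G.Adj u v := by
  have : G.Adj u v → u ≠ v := G.ne_of_adj
  simp only [crossComp, fromRel_adj, G.adj_comm v u]
  tauto

lemma crossComp_adj_of_not_iff {u v : V} (h : ¬(red u ↔ red v)) :
    (crossComp G red).Adj u v ↔ ¬G.Adj u v := by
  have : u ≠ v := by rintro rfl; exact h Iff.rfl
  simp only [crossComp, fromRel_adj, G.adj_comm v u]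
  tauto

lemma crossComp_crossComp (G : SimpleGraph V) (red : V → Prop) :
    crossComp (crossComp G red) red = G := by
  ext u v
  by_cases h : red u ↔ red v
  · rw [crossComp_adj_of_iff h, crossComp_adj_of_iff h]
  · rw [crossComp_adj_of_not_iff h, crossComp_adj_of_not_iff h, not_not]

lemma crossComp_adj_iff_crossComp_adj {u v : V} {x y : W} (hux : red u ↔ redH x)
    (hvy : red v ↔ redH y) :
    ((crossComp G red).Adj u v ↔ (crossComp H redH).Adj x y) ↔ (G.Adj u v ↔ H.Adj x y) := by
  by_cases h : red u ↔ red v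
  · rw [crossComp_adj_of_iff h, crossComp_adj_of_iff (by rwa [← hux, ← hvy])]
  · rw [crossComp_adj_of_not_iff h, crossComp_adj_of_not_iff (by rwa [← hux, ← hvy]), not_iff_not]

lemma Realizes.crossComp (h : Realizes G red H redH) :
    Realizes (crossComp G red) red (crossComp H redH) redH := by
  obtain ⟨f, hf, hred, hadj⟩ := h
  exact ⟨f, hf, hred, fun u w ↦
    (crossComp_adj_iff_crossComp_adj (hred u) (hred w)).2 (hadj u w)⟩

lemma IsPartialIso.of_crossComp {S : Set V} {f : V → V}
    (h : IsPartialIso (crossComp G red) red S f) : IsPartialIso G red S f := by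
  obtain ⟨hinj, hred, hadj⟩ := h
  exact ⟨hinj, hred, fun u hu v hv ↦
    (crossComp_adj_iff_crossComp_adj (hred u hu) (hred v hv)).1 (hadj u hu v hv)⟩

lemma Ultrahomogeneous.crossComp (hU : Ultrahomogeneous G red) :
    Ultrahomogeneous (crossComp G red) red := by
  intro S hS f hf
  obtain ⟨ψ, hψ, hψf⟩ := hU S hS f hf.of_crossComp
  exact ⟨⟨ψ.toEquiv, (crossComp_adj_iff_crossComp_adj (hψ _) (hψ _)).2 ψ.map_adj_iff⟩, hψ, hψf⟩

lemma IsUnionOfCliques.crossComp {P : Set V} (hP : IsUnionOfCliques G P)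
    (hmono : ∀ u ∈ P, ∀ v ∈ P, (red u ↔ red v)) : IsUnionOfCliques (crossComp G red) P := by
  intro u hu v hv w hw huv hvw huw
  rw [crossComp_adj_of_iff (hmono _ ‹_› _ ‹_›)] at huv hvw ⊢
  exact hP u hu v hv w hw huv hvw huw

lemma crossComp_Dgraph : crossComp Dgraph Dred = Dtilde := by
  ext u v
  fin_cases u <;> fin_cases v <;> simp [crossComp, Dgraph, Dtilde, Dred]

end CrossComplement

section RealizedDiamonds

variable {V : Type} {G : SimpleGraph V} {red : V → Prop}

lemma Realizes.exists_of_Dgraph (h : Realizes G red Dgraph Dred) :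
    ∃ r₁ r₂ b₁ b₂, red r₁ ∧ red r₂ ∧ ¬red b₁ ∧ ¬red b₂ ∧ G.Adj r₁ r₂ ∧ G.Adj b₁ b₂ ∧
      G.Adj b₁ r₁ ∧ G.Adj b₁ r₂ ∧ G.Adj b₂ r₁ ∧ ¬G.Adj b₂ r₂ := by
  obtain ⟨f, -, hred, hadj⟩ := h
  exact ⟨f 0, f 1, f 2, f 3, by simp [hred, hadj, Dred, Dgraph]⟩

lemma Realizes.exists_of_Dtilde (h : Realizes G red Dtilde Dred) :
    ∃ r₁ r₂ b₁ b₂, red r₁ ∧ red r₂ ∧ ¬red b₁ ∧ ¬red b₂ ∧ G.Adj r₁ r₂ ∧ G.Adj b₁ b₂ ∧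
      ¬G.Adj b₁ r₁ ∧ ¬G.Adj b₁ r₂ ∧ ¬G.Adj b₂ r₁ ∧ G.Adj b₂ r₂ := by
  obtain ⟨f, -, hred, hadj⟩ := h
  exact ⟨f 0, f 1, f 2, f 3, by simp [hred, hadj, Dred, Dtilde]⟩

end RealizedDiamonds

section CliqueIn

variable {V : Type} {G : SimpleGraph V} {P : Set V} {r s : V}

/-- The closed neighborhood of `r` within `P`. If `P` induces a disjoint union of cliques and
contains `r`, this is the maximal clique of `P` through `r`. -/
def cliqueIn (G : SimpleGraph V) (P : Set V) (r : V) : Set V :=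
  {v ∈ P | v = r ∨ G.Adj r v}

lemma self_mem_cliqueIn (hr : r ∈ P) : r ∈ cliqueIn G P r := ⟨hr, Or.inl rfl⟩

lemma mem_cliqueIn_of_adj (hs : s ∈ P) (h : G.Adj r s) : s ∈ cliqueIn G P r := ⟨hs, Or.inr h⟩

lemma IsUnionOfCliques.isClique_cliqueIn (hP : IsUnionOfCliques G P) (hr : r ∈ P) :
    G.IsClique (cliqueIn G P r) := by
  rintro u ⟨hu, rfl | hru⟩ v ⟨hv, rfl | hrv⟩ huv
  · exact absurd rfl huv
  · exact hrv
  · exact hru.symm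
  · exact hP u hu r hr v hv hru.symm hrv huv

lemma IsUnionOfCliques.cliqueIn_eq (hP : IsUnionOfCliques G P) (hr : r ∈ P)
    (hs : s ∈ cliqueIn G P r) : cliqueIn G P s = cliqueIn G P r := by
  have hclique := hP.isClique_cliqueIn hr
  obtain ⟨hsP, rfl | hrs⟩ := id hs
  · rfl
  ext v
  refine ⟨?_, fun hv ↦ ⟨hv.1, ?_⟩⟩
  · rintro ⟨hv, rfl | hsv⟩
    · exact hs
    · exact ⟨hv, (eq_or_ne v r).imp_right fun h ↦ hP r hr s hsP v hv hrs hsv h.symm⟩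
  · exact (eq_or_ne v s).imp_right fun h ↦ hclique hs hv h.symm

lemma image_cliqueIn (ψ : G ≃g G) (hψ : ∀ v, ψ v ∈ P ↔ v ∈ P) (r : V) :
    ψ '' cliqueIn G P r = cliqueIn G P (ψ r) := by
  ext v
  obtain ⟨u, rfl⟩ := ψ.surjective v
  simp only [ψ.injective.mem_set_image, cliqueIn, Set.mem_ofPred_eq, hψ, ψ.injective.eq_iff,
    ψ.map_adj_iff]

lemma image_neighborSet (ψ : G ≃g G) (v : V) : ψ '' G.neighborSet v = G.neighborSet (ψ v) := by
  ext w
  obtain ⟨u, rfl⟩ := ψ.surjective w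
  simp only [ψ.injective.mem_set_image, mem_neighborSet, ψ.map_adj_iff]

end CliqueIn

namespace Ultrahomogeneous

variable {V : Type} {G : SimpleGraph V} {red : V → Prop}

lemma exists_forall_map_eq (hU : Ultrahomogeneous G red) {ι : Type*} [Finite ι] {x y : ι → V}
    (hred : ∀ i, red (y i) ↔ red (x i)) (heq : ∀ i j, y i = y j ↔ x i = x j)
    (hadj : ∀ i j, G.Adj (y i) (y j) ↔ G.Adj (x i) (x j)) :
    ∃ ψ : G ≃g G, (∀ v, red (ψ v) ↔ red v) ∧ ∀ i, ψ (x i) = y i := by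
  have hfactors : y.FactorsThrough x := fun i j h ↦ (heq i j).2 h
  have hext : ∀ i, Function.extend x y id (x i) = y i := hfactors.extend_apply id
  obtain ⟨ψ, hψ, hψx⟩ := hU (Set.range x) (Set.finite_range x) (Function.extend x y id) <| by
    simp only [IsPartialIso, Set.InjOn, Set.forall_mem_range, hext]
    exact ⟨fun i j ↦ (heq i j).1, hred, hadj⟩
  exact ⟨ψ, hψ, fun i ↦ (hψx _ ⟨i, rfl⟩).trans (hext i)⟩

lemma exists_map_cross_pair (hU : Ultrahomogeneous G red) {b r b' r' : V} (hb : ¬red b)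
    (hr : red r) (hb' : ¬red b') (hr' : red r') (hbr : G.Adj b' r' ↔ G.Adj b r) :
    ∃ ψ : G ≃g G, (∀ v, red (ψ v) ↔ red v) ∧ ψ b = b' ∧ ψ r = r' := by
  have hne : b ≠ r := by rintro rfl; exact hb hr
  have hne' : b' ≠ r' := by rintro rfl; exact hb' hr'
  obtain ⟨ψ, hψ, hmap⟩ := hU.exists_forall_map_eq (x := ![b, r]) (y := ![b', r'])
    (by simp [Fin.forall_fin_two, *]) (by simp [Fin.forall_fin_two, hne, hne', hne.symm, hne'.symm])
    (by simp [Fin.forall_fin_two, hbr, G.adj_comm r, G.adj_comm r'])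
  exact ⟨ψ, hψ, hmap 0, hmap 1⟩

lemma exists_map_edge_vertex (hU : Ultrahomogeneous G red) {b c r b' c' r' : V} (hb : ¬red b)
    (hc : ¬red c) (hr : red r) (hb' : ¬red b') (hc' : ¬red c') (hr' : red r') (hbc : G.Adj b c)
    (hbc' : G.Adj b' c') (hbr : G.Adj b' r' ↔ G.Adj b r) (hcr : G.Adj c' r' ↔ G.Adj c r) :
    ∃ ψ : G ≃g G, (∀ v, red (ψ v) ↔ red v) ∧ ψ b = b' ∧ ψ c = c' ∧ ψ r = r' := by
  have ne_of_color {u v : V} (hu : ¬red u) (hv : red v) : u ≠ v ∧ v ≠ u :=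
    ⟨by rintro rfl; exact hu hv, by rintro rfl; exact hu hv⟩
  obtain ⟨ψ, hψ, hmap⟩ := hU.exists_forall_map_eq (x := ![b, c, r]) (y := ![b', c', r'])
    (by simp [Fin.forall_fin_succ, *])
    (by simp [Fin.forall_fin_succ, hbc.ne, hbc'.ne, hbc.ne', hbc'.ne', *])
    (by simp [Fin.forall_fin_succ, hbr, hcr, hbc, hbc', hbc.symm, hbc'.symm, G.adj_comm r,
      G.adj_comm r'])
  exact ⟨ψ, hψ, hmap 0, hmap 1, hmap 2⟩

lemma encard_cliqueIn_inter_neighborSet_eq (hU : Ultrahomogeneous G red) {b b' r : V}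
    (hb : ¬red b) (hb' : ¬red b') (hr : red r) (h : G.Adj b' r ↔ G.Adj b r) :
    (cliqueIn G {v | red v} r ∩ G.neighborSet b).encard =
      (cliqueIn G {v | red v} r ∩ G.neighborSet b').encard := by
  obtain ⟨ψ, hψ, hψb, hψr⟩ := hU.exists_map_cross_pair hb hr hb' hr h
  rw [← ψ.injective.encard_image (_ ∩ _), Set.image_inter ψ.injective,
    image_cliqueIn (P := {v | red v}) ψ hψ, image_neighborSet, hψb, hψr]

lemma adj_of_forall_ne_adj (hU : Ultrahomogeneous G red) {b b₁ b₂ c : V} (hb : ¬red b)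
    (hb₁ : ¬red b₁) (hb₂ : ¬red b₂) (hc : red c) (hbb₁ : G.Adj b b₁) (hbb₂ : G.Adj b b₂)
    (h : G.Adj b₂ c ↔ G.Adj b₁ c)
    (hb₁_adj : ∀ v ∈ cliqueIn G {v | red v} c, G.Adj b v → v ≠ c → G.Adj b₁ v) :
    ∀ v ∈ cliqueIn G {v | red v} c, G.Adj b v → v ≠ c → G.Adj b₂ v := by
  obtain ⟨ψ, hψ, hψb, rfl, hψc⟩ :=
    hU.exists_map_edge_vertex hb hb₁ hc hb hb₂ hc hbb₁ hbb₂ Iff.rfl h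
  intro v hv hbv hvc
  obtain ⟨u, rfl⟩ := ψ.surjective v
  have huc : u ≠ c := by rintro rfl; exact hvc hψc
  rw [← hψc, ← image_cliqueIn (P := {v | red v}) ψ hψ, ψ.injective.mem_set_image] at hv
  rw [← hψb, ψ.map_adj_iff] at hbv
  exact ψ.map_adj_iff.2 (hb₁_adj u hv hbv huc)

lemma exists_exchange_adj (hU : Ultrahomogeneous G red) {b b₀ x y : V} {T : Set V} (hb : ¬red b)
    (hb₀ : ¬red b₀) (hbb₀ : G.Adj b b₀) (hT : T.Finite) (hTred : ∀ v ∈ T, red v)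
    (hTclique : G.IsClique T) (hx : x ∈ T) (hy : y ∈ T) (hxy : G.Adj b₀ x ↔ G.Adj b₀ y) :
    ∃ b', ¬red b' ∧ G.Adj b' b₀ ∧ (G.Adj b' x ↔ G.Adj b y) ∧ (G.Adj b' y ↔ G.Adj b x) ∧
      ∀ v ∈ T, v ≠ x → v ≠ y → (G.Adj b' v ↔ G.Adj b v) := by
  classical
  have hswapT (v : V) (hv : v ∈ T) : Equiv.swap x y v ∈ T := by
    rw [Equiv.swap_apply_def]; split_ifs <;> assumption
  have hswap_adj (v : V) : G.Adj b₀ (Equiv.swap x y v) ↔ G.Adj b₀ v := by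
    rw [Equiv.swap_apply_def]; split_ifs with h h <;> simp only [h, hxy]
  have adj_iff_ne {u v : V} (hu : u ∈ T) (hv : v ∈ T) : G.Adj u v ↔ u ≠ v :=
    ⟨G.ne_of_adj, hTclique hu hv⟩
  have ne_of_mem (v : V) (hv : v ∈ T) : b₀ ≠ v := by rintro rfl; exact hb₀ (hTred _ hv)
  have := hT.to_subtype
  obtain ⟨ψ, hψ, hmap⟩ := hU.exists_forall_map_eq
    (x := fun i : Option T ↦ i.elim b₀ (↑)) (y := fun i ↦ i.elim b₀ (Equiv.swap x y ·))
    (by simp +contextual [Option.forall, hTred, hswapT])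
    (by simp +contextual [Option.forall, ne_of_mem, (ne_of_mem _ _).symm, hswapT])
    (by simp +contextual [Option.forall, adj_iff_ne, hswapT, hswap_adj, G.adj_comm _ b₀])
  have hψb₀ : ψ b₀ = b₀ := hmap none
  have hψT (v : V) (hv : v ∈ T) : ψ v = Equiv.swap x y v := hmap (some ⟨v, hv⟩)
  have hψx : ψ x = y := by rw [hψT x hx, Equiv.swap_apply_left]
  have hψy : ψ y = x := by rw [hψT y hy, Equiv.swap_apply_right]
  refine ⟨ψ b, by rwa [hψ], ?_, ?_, ?_, fun v hv hvx hvy ↦ ?_⟩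
  · simpa only [hψb₀] using ψ.map_adj_iff.2 hbb₀
  · simpa only [hψy] using ψ.map_adj_iff (v := b) (w := y)
  · simpa only [hψx] using ψ.map_adj_iff (v := b) (w := x)
  · have hψv : ψ v = v := by rw [hψT v hv, Equiv.swap_apply_of_ne_of_ne hvx hvy]
    simpa only [hψv] using ψ.map_adj_iff (v := b) (w := v)

lemma infinite_cliqueIn_inter_neighborSet_of_four_patterns (hU : Ultrahomogeneous G red)
    (hR : IsUnionOfCliques G {v | red v}) (hB : IsUnionOfCliques G {v | ¬red v})
    {b b₀ r a c x y : V} (hb : ¬red b) (hb₀ : ¬red b₀) (hbb₀ : G.Adj b b₀) (hr : red r)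
    (ha : a ∈ cliqueIn G {v | red v} r) (hba : G.Adj b a) (hb₀a : G.Adj b₀ a)
    (hc : c ∈ cliqueIn G {v | red v} r) (hbc : G.Adj b c) (hb₀c : ¬G.Adj b₀ c)
    (hx : x ∈ cliqueIn G {v | red v} r) (hbx : ¬G.Adj b x) (hb₀x : ¬G.Adj b₀ x)
    (hy : y ∈ cliqueIn G {v | red v} r) (hby : ¬G.Adj b y) (hb₀y : G.Adj b₀ y) :
    (cliqueIn G {v | red v} r ∩ G.neighborSet b).Infinite := by
  intro hfin
  set K := cliqueIn G {v | red v} r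
  set T := insert x (insert y (K ∩ G.neighborSet b)) with hT
  have hTK : T ⊆ K := by
    simp only [hT, Set.insert_subset_iff, hx, hy, Set.inter_subset_left, true_and]
  have hTfin : T.Finite := (hfin.insert y).insert x
  have hTclique : G.IsClique T := (hR.isClique_cliqueIn hr).subset hTK
  have hxT : x ∈ T := .inl rfl
  have hyT : y ∈ T := .inr (.inl rfl)
  have mem_T {v : V} (hv : v ∈ K) (hbv : G.Adj b v) : v ∈ T := .inr (.inr ⟨hv, hbv⟩)
  have hca : c ≠ a := by rintro rfl; exact hb₀c hb₀a
  have hcy : c ≠ y := by rintro rfl; exact hby hbc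
  have hyx : y ≠ x := by rintro rfl; exact hb₀x hb₀y
  obtain ⟨b', hb', hb'b₀, hb'c, -, hb'T⟩ := hU.exists_exchange_adj hb hb₀ hbb₀ hTfin
    (fun v hv ↦ (hTK hv).1) hTclique (mem_T hc hbc) hxT (iff_of_false hb₀c hb₀x)
  obtain ⟨b'', hb'', hb''b₀, hb''a, -, hb''T⟩ := hU.exists_exchange_adj hb' hb₀ hb'b₀ hTfin
    (fun v hv ↦ (hTK hv).1) hTclique (mem_T ha hba) hyT (iff_of_true hb₀a hb₀y)
  rw [iff_false_right hbx] at hb'c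
  rw [hb'T y hyT hcy.symm hyx, iff_false_right hby] at hb''a
  have hb''c : ¬G.Adj b'' c := by rwa [hb''T c (mem_T hc hbc) hca hcy]
  have adj_of_not_adj_c {d : V} (hd : ¬red d) (hdb₀ : G.Adj d b₀) (hdc : ¬G.Adj d c) :
      G.Adj b d :=
    hB b hb b₀ hb₀ d hd hbb₀ hdb₀.symm (by rintro rfl; exact hdc hbc)
  have hb'_adj (v : V) (hv : v ∈ K) (hbv : G.Adj b v) (hvc : v ≠ c) : G.Adj b' v :=
    (hb'T v (mem_T hv hbv) hvc (by rintro rfl; exact hbx hbv)).2 hbv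
  have hK : cliqueIn G {v | red v} c = K := hR.cliqueIn_eq hr hc
  exact hb''a <| hU.adj_of_forall_ne_adj hb hb' hb'' hc.1 (adj_of_not_adj_c hb' hb'b₀ hb'c)
    (adj_of_not_adj_c hb'' hb''b₀ hb''c) (iff_of_false hb''c hb'c) (hK ▸ hb'_adj) a (hK ▸ ha) hba
    hca.symm

lemma exists_adj_adj_of_realizes_Dgraph (hU : Ultrahomogeneous G red)
    (hD : Realizes G red Dgraph Dred) {r b b₀ : V} (hr : red r) (hb : ¬red b) (hb₀ : ¬red b₀)
    (hbb₀ : G.Adj b b₀) (hbr : ¬G.Adj b r) (hb₀r : G.Adj b₀ r) :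
    ∃ a, red a ∧ G.Adj r a ∧ G.Adj b a ∧ G.Adj b₀ a := by
  obtain ⟨s₁, s₂, c₁, c₂, hs₁, hs₂, hc₁, hc₂, hs, hc, h₁₁, h₁₂, h₂₁, h₂₂⟩ := hD.exists_of_Dgraph
  obtain ⟨ψ, hψ, rfl, rfl, rfl⟩ := hU.exists_map_edge_vertex hc₂ hc₁ hs₂ hb hb₀ hr hc.symm hbb₀
    (iff_of_false hbr h₂₂) (iff_of_true hb₀r h₁₂)
  exact ⟨ψ s₁, (hψ s₁).2 hs₁, ψ.map_adj_iff.2 hs.symm, ψ.map_adj_iff.2 h₂₁, ψ.map_adj_iff.2 h₁₁⟩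

lemma exists_adj_not_adj_of_finite (hU : Ultrahomogeneous G red) {b b₀ r s : V} (hb : ¬red b)
    (hb₀ : ¬red b₀) (hr : red r) (h : G.Adj b₀ r ↔ G.Adj b r)
    (hs : s ∈ cliqueIn G {v | red v} r) (hbs : ¬G.Adj b s) (hb₀s : G.Adj b₀ s)
    (hfin : (cliqueIn G {v | red v} r ∩ G.neighborSet b).Finite) :
    ∃ c ∈ cliqueIn G {v | red v} r, G.Adj b c ∧ ¬G.Adj b₀ c := by
  by_contra! hsub
  have hsubset : cliqueIn G {v | red v} r ∩ G.neighborSet b ⊆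
      cliqueIn G {v | red v} r ∩ G.neighborSet b₀ := fun v hv ↦ ⟨hv.1, hsub v hv.1 hv.2⟩
  have heq := hfin.eq_of_subset_of_encard_le hsubset
    (hU.encard_cliqueIn_inter_neighborSet_eq hb hb₀ hr h).ge
  have hs' : s ∈ cliqueIn G {v | red v} r ∩ G.neighborSet b := heq ▸ ⟨hs, hb₀s⟩
  exact hbs hs'.2

theorem exists_infinite_isClique_forall_adj (hU : Ultrahomogeneous G red)
    (hR : IsUnionOfCliques G {v | red v}) (hB : IsUnionOfCliques G {v | ¬red v})
    (hD : Realizes G red Dgraph Dred) (hDt : Realizes G red Dtilde Dred) :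
    ∃ (b : V) (K : Set V), ¬red b ∧ K.Infinite ∧ (∀ v ∈ K, red v) ∧ G.IsClique K ∧
      ∀ v ∈ K, G.Adj b v := by
  obtain ⟨r₁, r₂, b, b₀, hr₁, hr₂, hb, hb₀, hr, hbb₀, hbr₁, hbr₂, hb₀r₁, hb₀r₂⟩ :=
    hDt.exists_of_Dtilde
  have hr₁K : r₁ ∈ cliqueIn G {v | red v} r₁ := self_mem_cliqueIn hr₁
  have hr₂K : r₂ ∈ cliqueIn G {v | red v} r₁ := mem_cliqueIn_of_adj hr₂ hr
  refine ⟨b, cliqueIn G {v | red v} r₁ ∩ G.neighborSet b, hb, fun hfin ↦ ?_,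
    fun v hv ↦ hv.1.1, (hR.isClique_cliqueIn hr₁).subset Set.inter_subset_left, fun v hv ↦ hv.2⟩
  obtain ⟨a, ha, hr₂a, hba, hb₀a⟩ :=
    hU.exists_adj_adj_of_realizes_Dgraph hD hr₂ hb hb₀ hbb₀ hbr₂ hb₀r₂
  have haK : a ∈ cliqueIn G {v | red v} r₁ := by
    rw [← hR.cliqueIn_eq hr₁ hr₂K]
    exact mem_cliqueIn_of_adj ha hr₂a
  obtain ⟨c, hcK, hbc, hb₀c⟩ := hU.exists_adj_not_adj_of_finite hb hb₀ hr₁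
    (iff_of_false hb₀r₁ hbr₁) hr₂K hbr₂ hb₀r₂ hfin
  exact hU.infinite_cliqueIn_inter_neighborSet_of_four_patterns hR hB hb hb₀ hbb₀ hr₁ haK hba
    hb₀a hcK hbc hb₀c hr₁K hbr₁ hb₀r₁ hr₂K hbr₂ hb₀r₂ hfin

theorem exists_infinite_isClique_forall_not_adj (hU : Ultrahomogeneous G red)
    (hR : IsUnionOfCliques G {v | red v}) (hB : IsUnionOfCliques G {v | ¬red v})
    (hD : Realizes G red Dgraph Dred) (hDt : Realizes G red Dtilde Dred) :
    ∃ (b : V) (K : Set V), ¬red b ∧ K.Infinite ∧ (∀ v ∈ K, red v) ∧ G.IsClique K ∧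
      ∀ v ∈ K, ¬G.Adj b v := by
  have hD' := hDt.crossComp
  have hDt' := hD.crossComp
  rw [← crossComp_Dgraph, crossComp_crossComp] at hD'
  rw [crossComp_Dgraph] at hDt'
  obtain ⟨b, K, hb, hK, hred, hclique, hadj⟩ := hU.crossComp.exists_infinite_isClique_forall_adj
    (hR.crossComp fun _ hu _ hv ↦ iff_of_true hu hv)
    (hB.crossComp fun _ hu _ hv ↦ iff_of_false hu hv) hD' hDt'
  refine ⟨b, K, hb, hK, hred, fun u hu v hv huv ↦ ?_, fun v hv ↦ ?_⟩
  · exact (crossComp_adj_of_iff (iff_of_true (hred u hu) (hred v hv))).1 (hclique hu hv huv)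
  · exact (crossComp_adj_of_not_iff fun h ↦ hb (h.2 (hred v hv))).1 (hadj v hv)

end Ultrahomogeneous

theorem stmt_5_general {V : Type} (G : SimpleGraph V) (red : V → Prop)
    (hU : Ultrahomogeneous G red) (hR : IsUnionOfCliques G {v | red v})
    (hB : IsUnionOfCliques G {v | ¬red v}) (hD : Realizes G red Dgraph Dred)
    (hDt : Realizes G red Dtilde Dred) (ℓ : ℕ) :
    (∃ (b : V) (C : Finset V), ¬red b ∧ C.card = ℓ ∧ (∀ v ∈ C, red v) ∧
      (∀ u ∈ C, ∀ v ∈ C, u ≠ v → G.Adj u v) ∧ (∀ v ∈ C, G.Adj b v)) ∧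
    (∃ (b : V) (C : Finset V), ¬red b ∧ C.card = ℓ ∧ (∀ v ∈ C, red v) ∧
      (∀ u ∈ C, ∀ v ∈ C, u ≠ v → G.Adj u v) ∧ (∀ v ∈ C, ¬G.Adj b v)) := by
  constructor
  · obtain ⟨b, K, hb, hK, hred, hclique, hadj⟩ :=
      hU.exists_infinite_isClique_forall_adj hR hB hD hDt
    obtain ⟨C, hCK, hcard⟩ := hK.exists_subset_card_eq ℓ
    exact ⟨b, C, hb, hcard, fun v hv ↦ hred v (hCK hv), fun _ hu _ hv ↦ hclique (hCK hu) (hCK hv),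
      fun v hv ↦ hadj v (hCK hv)⟩
  · obtain ⟨b, K, hb, hK, hred, hclique, hnadj⟩ :=
      hU.exists_infinite_isClique_forall_not_adj hR hB hD hDt
    obtain ⟨C, hCK, hcard⟩ := hK.exists_subset_card_eq ℓ
    exact ⟨b, C, hb, hcard, fun v hv ↦ hred v (hCK hv), fun _ hu _ hv ↦ hclique (hCK hu) (hCK hv),
      fun v hv ↦ hnadj v (hCK hv)⟩

/-- in a basic CUH graph realizing `D` and `D̃`, for every `1 ≤ ℓ ≤ ω_R` both
the join and the disjoint union of a blue vertex with a red `ℓ`-clique are realized. -/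
theorem stmt_5 {V : Type} (G : SimpleGraph V) (red : V → Prop)
    (hG : IsBasicCUH G red)
    (hD : Realizes G red Dgraph Dred) (hDt : Realizes G red Dtilde Dred)
    (ℓ : ℕ) (hℓ : 0 < ℓ)
    (hωR : ∀ M : Set V, IsMaxCliqueIn G {v | red v} M → (ℓ : Cardinal) ≤ Cardinal.mk M) :
    (∃ (b : V) (C : Finset V), ¬ red b ∧ C.card = ℓ ∧ (∀ v ∈ C, red v) ∧
      (∀ u ∈ C, ∀ v ∈ C, u ≠ v → G.Adj u v) ∧ (∀ v ∈ C, G.Adj b v)) ∧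
    (∃ (b : V) (C : Finset V), ¬ red b ∧ C.card = ℓ ∧ (∀ v ∈ C, red v) ∧
      (∀ u ∈ C, ∀ v ∈ C, u ≠ v → G.Adj u v) ∧ (∀ v ∈ C, ¬ G.Adj b v)) := by
  obtain ⟨⟨-, -, hU, hR, hB⟩, -⟩ := hG
  exact stmt_5_general G red hU hR hB hD hDt ℓ
end

section
/- Let G be a basic CUH graph in which both D and D̃ are realized. Fix a maximal blue clique M_B and a finite red clique C with |C| ≤ ω_R. Then for every subset S ⊆ C there exists a vertex v ∈ M_B whose set of neighbors in C is exactly S. -/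
open SimpleGraph

/-!
A maximal red clique `K` and a maximal blue clique `L` form a bipartite graph which inherits
homogeneity from `G`, as long as the partial isomorphism to be extended meets both sides. Read it
as the family of the neighborhoods `N b ⊆ K` of the vertices `b ∈ L`. By `D` and `D̃`, any two
members `N b`, `N b'` cut `K` into four nonempty cells, whose sizes do not depend on the pair. All
four cells are infinite:

* If `N b' \ N b` has at least two elements and `N b ∩ N b'` is finite, there is a member `N c`
  containing two points of `N b' \ N b` and all but one point of `N b ∩ N b'`. It meets `N b'` in
  more than `|N b ∩ N b'|` points, which is impossible. So `|N b' \ N b| ≤ |N b ∩ N b'|` always.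
* If `N b \ N b'` is finite, then by this inequality, applied to the family and to its complement,
  some `N c` with `c ≠ b` agrees with `N b` on the symmetric difference of `N b` and `N b'`.
  Comparing the sizes of `N c \ N b'` and `N b \ N b'` forces `N c ⊆ N b`, which is impossible.

To realize a trace `S` on a finite set `C`, map the cells of `C` with respect to `N b` and `S`
injectively into those of `K` with respect to `N b` and `N b'`, extend, and pull `N b'` back.
-/

theorem exists_forall_coe_eq_of_disjoint {α β : Type*} [Nonempty β] {K L : Set α}
    (hKL : Disjoint K L) (f : K → β) (g : L → β) :
    ∃ F : α → β, (∀ x : K, F x = f x) ∧ ∀ y : L, F y = g y := by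
  have hinj : Function.Injective (Sum.elim ((↑) : K → α) ((↑) : L → α)) :=
    Subtype.val_injective.sumElim Subtype.val_injective fun x y => hKL.ne_of_mem x.2 y.2
  exact ⟨Function.extend (Sum.elim (↑) (↑)) (Sum.elim f g) fun _ => Classical.arbitrary β,
    fun x => hinj.extend_apply _ _ (Sum.inl x), fun y => hinj.extend_apply _ _ (Sum.inr y)⟩

theorem exists_injOn_of_encard_fiber_le {α β ι : Type*} [Nonempty β] {C : Set α} (hC : C.Finite)
    (κ : α → ι) (κ' : β → ι) (h : ∀ i, (C ∩ κ ⁻¹' {i}).encard ≤ (κ' ⁻¹' {i}).encard) :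
    ∃ f : α → β, Set.InjOn f C ∧ ∀ x ∈ C, κ' (f x) = κ x := by
  choose f hf hinj using fun i => (hC.inter_of_left _).exists_injOn_of_encard_le (h i)
  have hκ : ∀ x ∈ C, κ' (f (κ x) x) = κ x := fun x hx => hf (κ x) ⟨hx, rfl⟩
  refine ⟨fun x => f (κ x) x, fun x hx y hy hxy => ?_, hκ⟩
  have hxy' : κ x = κ y := by rw [← hκ x hx, ← hκ y hy]; exact congrArg κ' hxy
  exact hinj (κ x) ⟨hx, rfl⟩ ⟨hy, hxy'.symm⟩ (by simpa only [hxy'] using hxy)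

section HomogeneousFamily

variable {K L : Type*}

/-- A bipartite graph with sides `K` and `L`, encoded as the family `N` of the neighborhoods in `K`
of the vertices of `L`, in which every isomorphism between finite induced subgraphs meeting both
sides extends to an automorphism preserving the sides. -/
def IsHomogeneousFamily (N : L → Set K) : Prop :=
  ∀ (S : Set K) (T : Set L), S.Finite → T.Finite → S.Nonempty → T.Nonempty →
    ∀ (f : K → K) (g : L → L), Set.InjOn f S → Set.InjOn g T →
      (∀ x ∈ S, ∀ y ∈ T, f x ∈ N (g y) ↔ x ∈ N y) →
      ∃ (φ : Equiv.Perm K) (γ : Equiv.Perm L), (∀ x y, φ x ∈ N (γ y) ↔ x ∈ N y) ∧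
        Set.EqOn φ f S ∧ Set.EqOn γ g T

/-- The bipartite graph encoded by the family `N` of neighborhoods contains the bipartite part of
`D`: vertices `b, b'` with a common neighbor and a neighbor of `b` only. -/
def HasDiamond (N : L → Set K) : Prop :=
  ∃ b b', (N b ∩ N b').Nonempty ∧ (N b \ N b').Nonempty

/-- A homogeneous bipartite graph containing the bipartite parts of both `D` and `D̃`; the latter
is a diamond of the complementary family. -/
structure IsDiamondHomogeneousFamily (N : L → Set K) : Prop where
  homogeneous : IsHomogeneousFamily N
  diamond : HasDiamond N
  diamond_compl : HasDiamond Nᶜ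

theorem HasDiamond.of_map {K' L' : Type*} {N : L → Set K} {N' : L' → Set K'} (hN : HasDiamond N)
    (φ : K → K') (γ : L → L') (hφγ : ∀ x y, φ x ∈ N' (γ y) ↔ x ∈ N y) : HasDiamond N' := by
  obtain ⟨b, b', ⟨x, hxb, hxb'⟩, y, hyb, hyb'⟩ := hN
  exact ⟨γ b, γ b', ⟨φ x, (hφγ x b).2 hxb, (hφγ x b').2 hxb'⟩,
    φ y, (hφγ y b).2 hyb, mt (hφγ y b').1 hyb'⟩

namespace IsHomogeneousFamily

variable {N : L → Set K}

theorem compl (hN : IsHomogeneousFamily N) : IsHomogeneousFamily Nᶜ := by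
  intro S T hS hT hS₀ hT₀ f g hf hg hfg
  obtain ⟨φ, γ, hφγ, hφ, hγ⟩ := hN S T hS hT hS₀ hT₀ f g hf hg
    fun x hx y hy => not_iff_not.1 (hfg x hx y hy)
  exact ⟨φ, γ, fun x y => not_congr (hφγ x y), hφ, hγ⟩

theorem exists_perm_image_eq (hN : IsHomogeneousFamily N) {b b' c c' : L} {x y : K} (hb : b ≠ b')
    (hc : c ≠ c') (hxy : y ∈ N c ↔ x ∈ N b) (hxy' : y ∈ N c' ↔ x ∈ N b') :
    ∃ φ : Equiv.Perm K, N c = φ '' N b ∧ N c' = φ '' N b' := by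
  classical
  have hcb' : (if b' = b then c else c') = c' := if_neg hb.symm
  obtain ⟨φ, γ, hφγ, -, hγ⟩ := hN {x} {b, b'} (by simp) (by simp) (by simp) (by simp)
    (fun _ => y) (fun d => if d = b then c else c') (by simp)
    (by simp [Set.injOn_insert, hb, hb.symm, hc]) (by simp [hxy, hxy', hcb'])
  have himage : ∀ d, N (γ d) = φ '' N d := fun d => by
    ext z
    obtain ⟨w, rfl⟩ := φ.surjective z
    simp [hφγ]
  have hγb : γ b = c := by simpa using hγ (Set.mem_insert b _)
  have hγb' : γ b' = c' := by simpa [hcb'] using hγ (Set.mem_insert_of_mem b rfl)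
  exact ⟨φ, hγb ▸ himage b, hγb' ▸ himage b'⟩

theorem inter_nonempty_iff_sdiff_nonempty (hN : IsHomogeneousFamily N) (hD : HasDiamond N)
    {b b' : L} (hb : b ≠ b') : (N b ∩ N b').Nonempty ↔ (N b \ N b').Nonempty := by
  obtain ⟨c, c', hinter, hsdiff⟩ := hD
  have hc : c ≠ c' := by rintro rfl; simp at hsdiff
  constructor
  · rintro ⟨y, hyb, hyb'⟩
    obtain ⟨x, hxc, hxc'⟩ := hinter
    obtain ⟨φ, h, h'⟩ := hN.exists_perm_image_eq hc hb (iff_of_true hyb hxc)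
      (iff_of_true hyb' hxc')
    rw [h, h', ← Set.image_sdiff φ.injective]
    exact hsdiff.image φ
  · rintro ⟨y, hyb, hyb'⟩
    obtain ⟨x, hxc, hxc'⟩ := hsdiff
    obtain ⟨φ, h, h'⟩ := hN.exists_perm_image_eq hc hb (iff_of_true hyb hxc)
      (iff_of_false hyb' hxc')
    rw [h, h', ← Set.image_inter φ.injective]
    exact hinter.image φ

theorem exists_forall_mem_iff_of_encard_le (hN : IsHomogeneousFamily N) {b b' : L} {C S : Set K}
    (hC : C.Finite)
    (hinter : (C ∩ (N b ∩ S)).encard ≤ (N b ∩ N b').encard)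
    (hleft : (C ∩ (N b \ S)).encard ≤ (N b \ N b').encard)
    (hright : (C ∩ (S \ N b)).encard ≤ (N b' \ N b).encard)
    (hcompl : (C ∩ ((N b)ᶜ ∩ Sᶜ)).encard ≤ ((N b)ᶜ ∩ (N b')ᶜ).encard) :
    ∃ c, (c = b ↔ b' = b) ∧ ∀ x ∈ C, x ∈ N c ↔ x ∈ S := by
  rcases C.eq_empty_or_nonempty with rfl | hC₀
  · exact ⟨b', Iff.rfl, by simp⟩
  have : Nonempty K := hC₀.to_type
  obtain ⟨f, hf, hfC⟩ := exists_injOn_of_encard_fiber_le hC (fun x => (x ∈ N b, x ∈ S))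
    (fun x => (x ∈ N b, x ∈ N b')) (by
      rintro ⟨p, q⟩
      by_cases hp : p <;> by_cases hq : q <;>
        simp only [Set.preimage, Set.mem_singleton_iff, Prod.mk.injEq, hp, hq, eq_iff_iff,
          iff_true, iff_false]
      exacts [hinter, hleft, by rwa [Set.sdiff_eq, Set.sdiff_eq, Set.inter_comm S,
        Set.inter_comm (N b')] at hright, hcompl])
  simp only [Prod.mk.injEq, eq_iff_iff] at hfC
  obtain ⟨φ, γ, hφγ, hφ, hγ⟩ := hN C {b} hC (by simp) hC₀ (by simp) f id hf (by simp)
    (by simpa using fun x hx => (hfC x hx).1)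
  have hγb : γ b = b := hγ rfl
  refine ⟨γ.symm b', by rw [Equiv.symm_apply_eq, hγb], fun x hx => ?_⟩
  rw [← hφγ, Equiv.apply_symm_apply, hφ hx, (hfC x hx).2]

end IsHomogeneousFamily

namespace IsDiamondHomogeneousFamily

variable {N : L → Set K} {b b' c c' : L}

theorem compl (hN : IsDiamondHomogeneousFamily N) : IsDiamondHomogeneousFamily Nᶜ :=
  ⟨hN.homogeneous.compl, hN.diamond_compl, (compl_compl N).symm ▸ hN.diamond⟩

theorem inter_nonempty (hN : IsDiamondHomogeneousFamily N) (hb : b ≠ b') :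
    (N b ∩ N b').Nonempty := by
  have hiff := hN.homogeneous.inter_nonempty_iff_sdiff_nonempty hN.diamond hb
  have hiff' := hN.homogeneous.inter_nonempty_iff_sdiff_nonempty hN.diamond hb.symm
  have hiff_compl :=
    hN.compl.homogeneous.inter_nonempty_iff_sdiff_nonempty hN.compl.diamond hb
  rw [Set.inter_comm] at hiff'
  obtain ⟨-, -, ⟨x, -⟩, -⟩ := hN.diamond
  by_cases hx : x ∈ N b <;> by_cases hx' : x ∈ N b'
  · exact ⟨x, hx, hx'⟩
  · exact hiff.2 ⟨x, hx, hx'⟩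
  · exact hiff'.2 ⟨x, hx', hx⟩
  · obtain ⟨y, hy, hy'⟩ := hiff_compl.1 ⟨x, hx, hx'⟩
    exact hiff'.2 ⟨y, not_not.1 hy', hy⟩

theorem sdiff_nonempty (hN : IsDiamondHomogeneousFamily N) (hb : b ≠ b') :
    (N b \ N b').Nonempty :=
  (hN.homogeneous.inter_nonempty_iff_sdiff_nonempty hN.diamond hb).1 (hN.inter_nonempty hb)

theorem exists_perm_image_eq (hN : IsDiamondHomogeneousFamily N) (hb : b ≠ b') (hc : c ≠ c') :
    ∃ φ : Equiv.Perm K, N c = φ '' N b ∧ N c' = φ '' N b' := by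
  obtain ⟨x, hx, hx'⟩ := hN.inter_nonempty hb
  obtain ⟨y, hy, hy'⟩ := hN.inter_nonempty hc
  exact hN.homogeneous.exists_perm_image_eq hb hc (iff_of_true hy hx) (iff_of_true hy' hx')

theorem encard_inter_eq (hN : IsDiamondHomogeneousFamily N) (hb : b ≠ b') (hc : c ≠ c') :
    (N b ∩ N b').encard = (N c ∩ N c').encard := by
  obtain ⟨φ, h, h'⟩ := hN.exists_perm_image_eq hb hc
  rw [h, h', ← Set.image_inter φ.injective, φ.injective.encard_image]

theorem encard_sdiff_eq (hN : IsDiamondHomogeneousFamily N) (hb : b ≠ b') (hc : c ≠ c') :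
    (N b \ N b').encard = (N c \ N c').encard := by
  obtain ⟨φ, h, h'⟩ := hN.exists_perm_image_eq hb hc
  rw [h, h', ← Set.image_sdiff φ.injective, φ.injective.encard_image]

theorem inter_infinite_of_sdiff_nontrivial (hN : IsDiamondHomogeneousFamily N)
    (hnontrivial : (N b' \ N b).Nontrivial) : (N b ∩ N b').Infinite := by
  intro hfin
  obtain ⟨q₁, ⟨hq₁, hq₁b⟩, q₂, ⟨hq₂, hq₂b⟩, hq⟩ := hnontrivial
  have hb : b ≠ b' := by rintro rfl; exact hq₁b hq₁
  obtain ⟨a, ha⟩ := hN.inter_nonempty hb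
  set A := N b ∩ N b' with hA
  set S := (A \ {a}) ∪ {q₁, q₂} with hS
  have haS : a ∉ S := by
    rintro (h | rfl | rfl)
    exacts [h.2 rfl, hq₁b ha.1, hq₂b ha.1]
  obtain ⟨c, -, hc⟩ := hN.homogeneous.exists_forall_mem_iff_of_encard_le (b := b) (b' := b')
    (C := A ∪ {q₁, q₂}) (S := S) (hfin.union (by simp))
    (Set.encard_le_encard (by grind))
    ((Set.encard_le_encard (t := {a}) (by grind)).trans
      (by simpa using hN.sdiff_nonempty hb))
    (Set.encard_le_encard (by grind))
    ((Set.encard_le_encard (t := ∅) (by grind)).trans (by simp))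
  have hcb' : c ≠ b' := by
    rintro rfl
    exact haS ((hc a (Or.inl ha)).1 ha.2)
  have hsub : S ⊆ N c ∩ N b' := fun x hx => ⟨(hc x (by grind)).2 hx, by grind⟩
  have hcard : S.encard = A.encard + 1 := by
    rw [hS, Set.encard_union_eq (by rw [Set.disjoint_left]; grind), Set.encard_pair hq,
      ← Set.encard_sdiff_singleton_add_one ha, add_assoc, one_add_one_eq_two]
  have hle := Set.encard_le_encard hsub
  rw [hN.encard_inter_eq hcb' hb, hcard, ENat.add_one_le_iff hfin.encard_lt_top.ne] at hle
  exact hle.false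

theorem encard_sdiff_le_encard_inter (hN : IsDiamondHomogeneousFamily N) (hb : b ≠ b') :
    (N b' \ N b).encard ≤ (N b ∩ N b').encard := by
  rcases (N b' \ N b).subsingleton_or_nontrivial with hsub | hnontrivial
  · exact (Set.encard_le_one_iff_subsingleton.2 hsub).trans
      (Set.one_le_encard_iff_nonempty.2 (hN.inter_nonempty hb))
  · rw [(hN.inter_infinite_of_sdiff_nontrivial hnontrivial).encard_eq]
    exact le_top

theorem exists_ne_forall_mem_sdiff_union_sdiff_iff (hN : IsDiamondHomogeneousFamily N) (hb : b ≠ b')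
    (hfin : (N b \ N b').Finite) :
    ∃ c ≠ b, ∀ x ∈ (N b \ N b') ∪ (N b' \ N b), x ∈ N c ↔ x ∈ N b := by
  have hfin' : (N b' \ N b).Finite := by
    rw [← Set.encard_lt_top_iff, hN.encard_sdiff_eq hb.symm hb]
    exact hfin.encard_lt_top
  have hle : (N b \ N b').encard ≤ (N b ∩ N b').encard :=
    Set.inter_comm (N b) _ ▸ hN.encard_sdiff_le_encard_inter hb.symm
  have hle_compl : (N b' \ N b).encard ≤ ((N b)ᶜ ∩ (N b')ᶜ).encard := by
    simpa [Set.sdiff_eq, Set.inter_comm] using hN.compl.encard_sdiff_le_encard_inter hb.symm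
  obtain ⟨c, hcb, hc⟩ := hN.homogeneous.exists_forall_mem_iff_of_encard_le
    (b := b) (b' := b') (S := N b) (hfin.union hfin')
    ((Set.encard_le_encard (by grind)).trans hle)
    (by simp) (by simp)
    ((Set.encard_le_encard (by grind)).trans hle_compl)
  exact ⟨c, mt hcb.1 hb.symm, hc⟩

theorem sdiff_infinite (hN : IsDiamondHomogeneousFamily N) (hb : b ≠ b') :
    (N b \ N b').Infinite := by
  intro hfin
  obtain ⟨c, hcb, hc⟩ := hN.exists_ne_forall_mem_sdiff_union_sdiff_iff hb hfin
  have hcb' : c ≠ b' := by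
    rintro rfl
    obtain ⟨x, hx⟩ := hN.sdiff_nonempty hb
    exact hx.2 ((hc x (Or.inl hx)).2 hx.1)
  have hsub : N b \ N b' ⊆ N c \ N b' := fun x hx => ⟨(hc x (Or.inl hx)).2 hx.1, hx.2⟩
  have heq : N b \ N b' = N c \ N b' :=
    hfin.eq_of_subset_of_encard_le hsub (hN.encard_sdiff_eq hcb' hb).le
  obtain ⟨w, hwc, hwb⟩ := hN.sdiff_nonempty hcb
  by_cases hwb' : w ∈ N b'
  · exact hwb ((hc w (Or.inr ⟨hwb', hwb⟩)).1 hwc)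
  · exact hwb (heq.symm.subset ⟨hwc, hwb'⟩).1

theorem inter_infinite (hN : IsDiamondHomogeneousFamily N) (hb : b ≠ b') :
    (N b ∩ N b').Infinite :=
  hN.inter_infinite_of_sdiff_nontrivial (hN.sdiff_infinite hb.symm).nontrivial

theorem exists_forall_mem_iff (hN : IsDiamondHomogeneousFamily N) {C : Set K} (hC : C.Finite)
    (S : Set K) : ∃ b, ∀ x ∈ C, x ∈ N b ↔ x ∈ S := by
  obtain ⟨b, b', -, hsdiff⟩ := hN.diamond
  have hb : b ≠ b' := by rintro rfl; simp at hsdiff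
  have hcompl : ((N b)ᶜ ∩ (N b')ᶜ).Infinite := hN.compl.inter_infinite hb
  obtain ⟨c, -, hc⟩ := hN.homogeneous.exists_forall_mem_iff_of_encard_le (b := b) (b' := b')
    (S := S) hC (by simp [(hN.inter_infinite hb).encard_eq])
    (by simp [(hN.sdiff_infinite hb).encard_eq]) (by simp [(hN.sdiff_infinite hb.symm).encard_eq])
    (by simp [hcompl.encard_eq])
  exact ⟨c, hc⟩

end IsDiamondHomogeneousFamily

end HomogeneousFamily

section Cliques

variable {V : Type} {G : SimpleGraph V} {red : V → Prop} {P K K' L L' M M' S T : Set V}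
  {F : V → V}

theorem exists_isMaxCliqueIn_superset (hSP : S ⊆ P) (hS : G.IsClique S) :
    ∃ M, IsMaxCliqueIn G P M ∧ S ⊆ M := by
  obtain ⟨M, hSM, hM⟩ := zorn_subset_nonempty {M | M ⊆ P ∧ G.IsClique M}
    (fun c hc hchain _ => ⟨⋃₀ c, ⟨Set.sUnion_subset fun M hM => (hc hM).1,
      (Set.pairwise_sUnion hchain.directedOn).2 fun M hM => (hc hM).2⟩,
      fun _ => Set.subset_sUnion_of_mem⟩) S ⟨hSP, hS⟩
  exact ⟨M, ⟨hM.prop.1, hM.prop.2, fun M' hM'P hM' => hM.eq_of_subset ⟨hM'P, hM'⟩⟩, hSM⟩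

namespace IsMaxCliqueIn

theorem nonempty (hM : IsMaxCliqueIn G P M) (hP : P.Nonempty) : M.Nonempty := by
  obtain ⟨v, hv⟩ := hP
  rw [Set.nonempty_iff_ne_empty]
  rintro rfl
  exact Set.singleton_ne_empty v
    (hM.2.2 {v} (by simpa using hv) (by simp) (Set.empty_subset _)).symm

theorem mem_iff (hM : IsMaxCliqueIn G P M) (hP : IsUnionOfCliques G P) {v w : V} (hv : v ∈ M) :
    w ∈ M ↔ w ∈ P ∧ (v = w ∨ G.Adj v w) := by
  refine ⟨fun hw => ⟨hM.1 hw, or_iff_not_imp_left.2 (hM.2.1 hv hw)⟩, ?_⟩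
  rintro ⟨hw, rfl | hvw⟩
  · exact hv
  have hcl : G.IsClique (insert w M) := hM.2.1.insert fun u hu hne => by
    rcases eq_or_ne v u with rfl | huv
    · exact hvw.symm
    · exact hP w hw v (hM.1 hv) u (hM.1 hu) hvw.symm (hM.2.1 hv hu huv) hne
  rw [hM.2.2 _ (Set.insert_subset hw hM.1) hcl (Set.subset_insert _ _)]
  exact Set.mem_insert _ _

theorem map_mem_iff (hM : IsMaxCliqueIn G P M) (hM' : IsMaxCliqueIn G P M')
    (hP : IsUnionOfCliques G P) (ψ : G ≃g G) (hψ : ∀ v, ψ v ∈ P ↔ v ∈ P) {v : V} (hv : v ∈ M)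
    (hψv : ψ v ∈ M') (w : V) : ψ w ∈ M' ↔ w ∈ M := by
  rw [hM.mem_iff hP hv, hM'.mem_iff hP hψv, hψ, ψ.injective.eq_iff, ψ.map_adj_iff]

end IsMaxCliqueIn

theorem isPartialIso_of_isClique (hF : Set.InjOn F S) (hred : ∀ v ∈ S, red (F v) ↔ red v)
    (hS : G.IsClique S) (hFS : G.IsClique (F '' S)) : IsPartialIso G red S F := by
  refine ⟨hF, hred, fun u hu v hv => ?_⟩
  rcases eq_or_ne u v with rfl | huv
  · simp
  · exact iff_of_true (hFS (Set.mem_image_of_mem F hu) (Set.mem_image_of_mem F hv)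
      (hF.ne hu hv huv)) (hS hu hv huv)

theorem IsPartialIso.union (hS : IsPartialIso G red S F) (hT : IsPartialIso G red T F)
    (hSred : ∀ v ∈ S, red v) (hTblue : ∀ v ∈ T, ¬ red v)
    (hadj : ∀ u ∈ S, ∀ v ∈ T, G.Adj (F u) (F v) ↔ G.Adj u v) :
    IsPartialIso G red (S ∪ T) F := by
  have hne : ∀ u ∈ S, ∀ v ∈ T, F u ≠ F v := fun u hu v hv huv =>
    hTblue v hv ((hT.2.1 v hv).1 (huv ▸ (hS.2.1 u hu).2 (hSred u hu)))
  refine ⟨?_, ?_, ?_⟩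
  · rintro u (hu | hu) v (hv | hv) huv
    exacts [hS.1 hu hv huv, (hne u hu v hv huv).elim, (hne v hv u hu huv.symm).elim,
      hT.1 hu hv huv]
  · rintro v (hv | hv)
    exacts [hS.2.1 v hv, hT.2.1 v hv]
  · rintro u (hu | hu) v (hv | hv)
    · exact hS.2.2 u hu v hv
    · exact hadj u hu v hv
    · rw [G.adj_comm, hadj v hv u hu, G.adj_comm]
    · exact hT.2.2 u hu v hv

theorem isPartialIso_coe_image (hK : G.IsClique K) (hK' : G.IsClique K')
    (hred : ∀ u ∈ K, ∀ v ∈ K', red v ↔ red u) {S : Set K} {f : K → K'} (hf : Set.InjOn f S)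
    (hF : ∀ x : K, F x = f x) : IsPartialIso G red ((↑) '' S) F := by
  refine isPartialIso_of_isClique ?_ ?_ (hK.subset (by simp)) (hK'.subset ?_)
  · rintro _ ⟨x, hx, rfl⟩ _ ⟨y, hy, rfl⟩ hxy
    rw [hF, hF] at hxy
    exact congrArg _ (hf hx hy (Subtype.ext hxy))
  · rintro _ ⟨x, -, rfl⟩
    rw [hF]
    exact hred _ x.2 _ (f x).2
  · rintro _ ⟨_, ⟨x, -, rfl⟩, rfl⟩
    rw [hF]
    exact (f x).2

/-- The neighborhoods in `K` of the vertices of `L`, which encode the bipartite graph between the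
vertex sets `K` and `L`. -/
def crossNeighborSet (G : SimpleGraph V) (K L : Set V) : L → Set K :=
  fun y => {x | G.Adj x y}

namespace Ultrahomogeneous

theorem exists_equiv_cliques (hG : Ultrahomogeneous G red) (hR : IsUnionOfCliques G {v | red v})
    (hB : IsUnionOfCliques G {v | ¬ red v}) (hK : IsMaxCliqueIn G {v | red v} K)
    (hK' : IsMaxCliqueIn G {v | red v} K') (hL : IsMaxCliqueIn G {v | ¬ red v} L)
    (hL' : IsMaxCliqueIn G {v | ¬ red v} L') {S : Set K} {T : Set L} (hS : S.Finite)
    (hT : T.Finite) (hS₀ : S.Nonempty) (hT₀ : T.Nonempty) {f : K → K'} {g : L → L'}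
    (hf : Set.InjOn f S) (hg : Set.InjOn g T)
    (hfg : ∀ x ∈ S, ∀ y ∈ T, f x ∈ crossNeighborSet G K' L' (g y) ↔ x ∈ crossNeighborSet G K L y) :
    ∃ (φ : K ≃ K') (γ : L ≃ L'),
      (∀ x y, φ x ∈ crossNeighborSet G K' L' (γ y) ↔ x ∈ crossNeighborSet G K L y) ∧
        Set.EqOn φ f S ∧ Set.EqOn γ g T := by
  obtain ⟨x, hx⟩ := hS₀
  obtain ⟨y, hy⟩ := hT₀
  have : Nonempty V := ⟨x⟩
  have hKL : Disjoint K L := Set.disjoint_left.2 fun v hv hv' => hL.1 hv' (hK.1 hv)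
  obtain ⟨F, hFf, hFg⟩ := exists_forall_coe_eq_of_disjoint hKL (fun x => (f x : V))
    (fun y => (g y : V))
  have hF : IsPartialIso G red ((↑) '' S ∪ (↑) '' T) F := by
    refine IsPartialIso.union
      (isPartialIso_coe_image hK.2.1 hK'.2.1
        (fun u hu v hv => iff_of_true (hK'.1 hv) (hK.1 hu)) hf hFf)
      (isPartialIso_coe_image hL.2.1 hL'.2.1
        (fun u hu v hv => iff_of_false (hL'.1 hv) (hL.1 hu)) hg hFg) ?_ ?_ ?_
    · rintro _ ⟨x, -, rfl⟩
      exact hK.1 x.2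
    · rintro _ ⟨y, -, rfl⟩
      exact hL.1 y.2
    · rintro _ ⟨x, hx, rfl⟩ _ ⟨y, hy, rfl⟩
      rw [hFf, hFg]
      exact hfg x hx y hy
  obtain ⟨ψ, hψ, hψF⟩ := hG _ ((hS.image _).union (hT.image _)) F hF
  have hψf : ∀ x ∈ S, ψ x = f x := fun x hx => (hψF x (Or.inl ⟨x, hx, rfl⟩)).trans (hFf x)
  have hψg : ∀ y ∈ T, ψ y = g y := fun y hy => (hψF y (Or.inr ⟨y, hy, rfl⟩)).trans (hFg y)
  have hψK := hK.map_mem_iff hK' hR ψ hψ x.2 (hψf x hx ▸ (f x).2)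
  have hψL := hL.map_mem_iff hL' hB ψ (fun v => not_congr (hψ v)) y.2 (hψg y hy ▸ (g y).2)
  exact ⟨ψ.toEquiv.subtypeEquiv fun v => (hψK v).symm, ψ.toEquiv.subtypeEquiv fun v => (hψL v).symm,
    fun _ _ => ψ.map_adj_iff, fun x hx => Subtype.ext (hψf x hx),
    fun y hy => Subtype.ext (hψg y hy)⟩

theorem isHomogeneousFamily_crossNeighborSet (hG : Ultrahomogeneous G red)
    (hR : IsUnionOfCliques G {v | red v}) (hB : IsUnionOfCliques G {v | ¬ red v})
    (hK : IsMaxCliqueIn G {v | red v} K) (hL : IsMaxCliqueIn G {v | ¬ red v} L) :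
    IsHomogeneousFamily (crossNeighborSet G K L) :=
  fun _ _ hS hT hS₀ hT₀ _ _ hf hg hfg =>
    hG.exists_equiv_cliques hR hB hK hK hL hL hS hT hS₀ hT₀ hf hg hfg

theorem exists_map_crossNeighborSet (hG : Ultrahomogeneous G red)
    (hR : IsUnionOfCliques G {v | red v}) (hB : IsUnionOfCliques G {v | ¬ red v})
    (hK : IsMaxCliqueIn G {v | red v} K) (hK' : IsMaxCliqueIn G {v | red v} K')
    (hL : IsMaxCliqueIn G {v | ¬ red v} L) (hL' : IsMaxCliqueIn G {v | ¬ red v} L')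
    {x x' : K} {y : L} (hx : x ∈ crossNeighborSet G K L y) (hx' : x' ∉ crossNeighborSet G K L y) :
    ∃ (φ : K → K') (γ : L → L'),
      ∀ x y, φ x ∈ crossNeighborSet G K' L' (γ y) ↔ x ∈ crossNeighborSet G K L y := by
  obtain ⟨r, hr⟩ := hK'.nonempty ⟨x, hK.1 x.2⟩
  obtain ⟨b, hb⟩ := hL'.nonempty ⟨y, hL.1 y.2⟩
  obtain ⟨z, hz⟩ : ∃ z : K, G.Adj r b ↔ z ∈ crossNeighborSet G K L y := by
    by_cases hrb : G.Adj r b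
    exacts [⟨x, iff_of_true hrb hx⟩, ⟨x', iff_of_false hrb hx'⟩]
  obtain ⟨φ, γ, hφγ, -⟩ := hG.exists_equiv_cliques hR hB hK hK' hL hL' (S := {z}) (T := {y})
    (f := fun _ => ⟨r, hr⟩) (g := fun _ => ⟨b, hb⟩) (by simp) (by simp) (by simp) (by simp)
    (by simp) (by simp) (by rintro _ rfl _ rfl; exact hz)
  exact ⟨φ, γ, hφγ⟩

end Ultrahomogeneous

theorem Realizes.exists_isMaxCliqueIn {H : SimpleGraph (Fin 4)} (h : Realizes G red H Dred)
    (h01 : H.Adj 0 1) (h23 : H.Adj 2 3) :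
    ∃ K L, IsMaxCliqueIn G {v | red v} K ∧ IsMaxCliqueIn G {v | ¬ red v} L ∧
      ∃ (x x' : K) (y y' : L), (G.Adj x y ↔ H.Adj 0 2) ∧ (G.Adj x y' ↔ H.Adj 0 3) ∧
        (G.Adj x' y ↔ H.Adj 1 2) ∧ (G.Adj x' y' ↔ H.Adj 1 3) := by
  obtain ⟨f, -, hred, hadj⟩ := h
  obtain ⟨K, hK, hfK⟩ := exists_isMaxCliqueIn_superset (G := G) (P := {v | red v})
    (S := {f 0, f 1}) (by simp [Set.insert_subset_iff, hred, Dred])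
    (isClique_pair.2 fun _ => (hadj 0 1).2 h01)
  obtain ⟨L, hL, hfL⟩ := exists_isMaxCliqueIn_superset (G := G) (P := {v | ¬ red v})
    (S := {f 2, f 3}) (by simp [Set.insert_subset_iff, hred, Dred])
    (isClique_pair.2 fun _ => (hadj 2 3).2 h23)
  exact ⟨K, L, hK, hL, ⟨f 0, hfK (by simp)⟩, ⟨f 1, hfK (by simp)⟩, ⟨f 2, hfL (by simp)⟩,
    ⟨f 3, hfL (by simp)⟩, hadj 0 2, hadj 0 3, hadj 1 2, hadj 1 3⟩

theorem exists_hasDiamond_of_realizes_Dgraph (hD : Realizes G red Dgraph Dred) :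
    ∃ K L, IsMaxCliqueIn G {v | red v} K ∧ IsMaxCliqueIn G {v | ¬ red v} L ∧
      HasDiamond (crossNeighborSet G K L) := by
  obtain ⟨K, L, hK, hL, x, x', y, y', hxy, hxy', hxy₁, hxy₁'⟩ :=
    hD.exists_isMaxCliqueIn (by simp [Dgraph]) (by simp [Dgraph])
  exact ⟨K, L, hK, hL, y, y', ⟨x, by simp [crossNeighborSet, hxy, hxy', Dgraph]⟩,
    x', by simp [crossNeighborSet, hxy₁, hxy₁', Dgraph]⟩

theorem exists_hasDiamond_compl_of_realizes_Dtilde (hD : Realizes G red Dtilde Dred) :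
    ∃ K L, IsMaxCliqueIn G {v | red v} K ∧ IsMaxCliqueIn G {v | ¬ red v} L ∧
      HasDiamond (crossNeighborSet G K L)ᶜ := by
  obtain ⟨K, L, hK, hL, x, x', y, y', hxy, hxy', hxy₁, hxy₁'⟩ :=
    hD.exists_isMaxCliqueIn (by simp [Dtilde]) (by simp [Dtilde])
  exact ⟨K, L, hK, hL, y, y', ⟨x, by simp [crossNeighborSet, hxy, hxy', Dtilde]⟩,
    x', by simp [crossNeighborSet, hxy₁, hxy₁', Dtilde]⟩

theorem Ultrahomogeneous.isDiamondHomogeneousFamily_crossNeighborSet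
    (hG : Ultrahomogeneous G red) (hR : IsUnionOfCliques G {v | red v})
    (hB : IsUnionOfCliques G {v | ¬ red v}) (hD : Realizes G red Dgraph Dred)
    (hDt : Realizes G red Dtilde Dred) (hK : IsMaxCliqueIn G {v | red v} K)
    (hL : IsMaxCliqueIn G {v | ¬ red v} L) :
    IsDiamondHomogeneousFamily (crossNeighborSet G K L) where
  homogeneous := hG.isHomogeneousFamily_crossNeighborSet hR hB hK hL
  diamond := by
    obtain ⟨K₀, L₀, hK₀, hL₀, hdiamond⟩ := exists_hasDiamond_of_realizes_Dgraph hD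
    have ⟨_, _, ⟨_, _, hx⟩, _, _, hx'⟩ := hdiamond
    obtain ⟨φ, γ, hφγ⟩ := hG.exists_map_crossNeighborSet hR hB hK₀ hK hL₀ hL hx hx'
    exact hdiamond.of_map φ γ hφγ
  diamond_compl := by
    obtain ⟨K₀, L₀, hK₀, hL₀, hdiamond⟩ := exists_hasDiamond_compl_of_realizes_Dtilde hDt
    have ⟨_, _, ⟨_, _, hx⟩, _, _, hx'⟩ := hdiamond
    obtain ⟨φ, γ, hφγ⟩ := hG.exists_map_crossNeighborSet hR hB hK₀ hK hL₀ hL (not_not.1 hx') hx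
    exact hdiamond.of_map φ γ fun x y => not_congr (hφγ x y)

end Cliques


theorem stmt_7_general {V : Type} (G : SimpleGraph V) (red : V → Prop)
    (hG : Ultrahomogeneous G red) (hR : IsUnionOfCliques G {v | red v})
    (hB : IsUnionOfCliques G {v | ¬ red v}) (hD : Realizes G red Dgraph Dred)
    (hDt : Realizes G red Dtilde Dred) (MB : Set V) (hMB : IsMaxCliqueIn G {v | ¬ red v} MB)
    (C : Set V) (hC : C.Finite) (hCred : ∀ v ∈ C, red v) (hCcl : G.IsClique C) (S : Set V) :
    ∃ v ∈ MB, ∀ u ∈ C, G.Adj v u ↔ u ∈ S := by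
  obtain ⟨K, hK, hCK⟩ := exists_isMaxCliqueIn_superset hCred hCcl
  have hfamily := hG.isDiamondHomogeneousFamily_crossNeighborSet hR hB hD hDt hK hMB
  obtain ⟨v, hv⟩ := hfamily.exists_forall_mem_iff (C := (↑) ⁻¹' C)
    (hC.preimage Subtype.val_injective.injOn) ((↑) ⁻¹' S)
  exact ⟨v, v.2, fun u hu => (G.adj_comm _ _).trans (hv ⟨u, hCK hu⟩ hu)⟩

/-- in a basic CUH graph realizing `D` and `D̃`, given a maximal blue clique
`M_B` and a finite red clique `C` with `|C| ≤ ω_R`, every subset `S ⊆ C` is the exact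
neighborhood in `C` of some vertex of `M_B`. -/
theorem stmt_7 {V : Type} (G : SimpleGraph V) (red : V → Prop)
    (hG : IsBasicCUH G red)
    (hD : Realizes G red Dgraph Dred) (hDt : Realizes G red Dtilde Dred)
    (MB : Set V) (hMB : IsMaxCliqueIn G {v | ¬ red v} MB)
    (C : Finset V) (hCred : ∀ v ∈ C, red v)
    (hCcl : ∀ u ∈ C, ∀ v ∈ C, u ≠ v → G.Adj u v)
    (hωR : ∀ M : Set V, IsMaxCliqueIn G {v | red v} M → (C.card : Cardinal) ≤ Cardinal.mk M) :
    ∀ S ⊆ C, ∃ v ∈ MB, ∀ u ∈ C, G.Adj v u ↔ u ∈ S := by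
  intro S _
  exact stmt_7_general G red hG.1.2.2.1 hG.1.2.2.2.1 hG.1.2.2.2.2 hD hDt MB hMB C C.finite_toSet
    hCred hCcl S
end

section
/- Let G be a basic CUH graph that omits D and in which at least one color class does not form an independent set. If ω_R > 1, then every blue vertex has both a neighbor and a non-neighbor in every maximal red clique; moreover, G[M_R ∪ M_B] ≅ G[M_R′ ∪ M_B′] for all maximal red cliques M_R, M_R′ and all maximal blue cliques M_B, M_B′. -/
open SimpleGraph

/-
By homogeneity it does not matter which red-blue edge or non-edge one looks at. If some blue vertex
is adjacent to exactly one end of some red edge, then moving this configuration by automorphisms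
shows that every blue vertex splits every red clique; otherwise the vertices of a red clique have
the same blue neighbors and the graph is a blow-up of its quotient by the red cliques. Hence every
pair of a red and a blue maximal clique contains a red-blue edge, and an automorphism moving one
such edge to another one carries the cliques along.
-/

section Cliques

variable {V : Type} {G : SimpleGraph V} {P M M' : Set V} {u v w r : V}

/-- The relation of lying in a common clique of `G` induced on `P`. Vertices outside `P` are
related only to themselves, so that this is an equivalence relation on all of `V` when `P` is a
union of cliques. -/
def SameClique (G : SimpleGraph V) (P : Set V) (u v : V) : Prop :=
  u = v ∨ u ∈ P ∧ v ∈ P ∧ G.Adj u v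

lemma SameClique.mem_iff_mem (h : SameClique G P u v) : u ∈ P ↔ v ∈ P := by
  rcases h with rfl | ⟨hu, hv, -⟩
  · rfl
  · exact iff_of_true hu hv

lemma SameClique.eq_of_notMem (h : SameClique G P u v) (hv : v ∉ P) : u = v :=
  h.resolve_right fun h' => hv h'.2.1

lemma SameClique.symm (h : SameClique G P u v) : SameClique G P v u :=
  h.imp Eq.symm fun ⟨hu, hv, huv⟩ => ⟨hv, hu, huv.symm⟩

lemma SameClique.trans (hP : IsUnionOfCliques G P) (huv : SameClique G P u v)
    (hvw : SameClique G P v w) : SameClique G P u w := by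
  rcases huv with rfl | ⟨hu, hv, huv⟩
  · exact hvw
  rcases hvw with rfl | ⟨-, hw, hvw⟩
  · exact Or.inr ⟨hu, hv, huv⟩
  exact or_iff_not_imp_left.2 fun hne => ⟨hu, hw, hP u hu v hv w hw huv hvw hne⟩

lemma sameClique_map_iff (ψ : G ≃g G) (hψ : ∀ v, ψ v ∈ P ↔ v ∈ P) :
    SameClique G P (ψ u) (ψ v) ↔ SameClique G P u v := by
  simp only [SameClique, ψ.injective.eq_iff, hψ, ψ.map_adj_iff]

/-- The equivalence relation `SameClique`, whose classes inside `P` are the maximal cliques. -/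
def IsUnionOfCliques.setoid (hP : IsUnionOfCliques G P) : Setoid V where
  r := SameClique G P
  iseqv := ⟨fun _ => Or.inl rfl, SameClique.symm, SameClique.trans hP⟩

lemma IsUnionOfCliques.isMaxCliqueIn_setOf_sameClique (hP : IsUnionOfCliques G P) (hr : r ∈ P) :
    IsMaxCliqueIn G P {v | SameClique G P r v} := by
  refine ⟨fun v hv => hv.mem_iff_mem.1 hr, fun u hu v hv huv => ?_, fun M hMP hMc hsub => ?_⟩
  · exact ((hu.symm.trans hP hv).resolve_left huv).2.2
  · have hrM : r ∈ M := hsub (Or.inl rfl)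
    exact hsub.antisymm fun v hv => or_iff_not_imp_left.2 fun hne => ⟨hr, hMP hv, hMc hrM hv hne⟩

lemma IsMaxCliqueIn.mem_iff_sameClique (hM : IsMaxCliqueIn G P M) (hP : IsUnionOfCliques G P)
    (hr : r ∈ M) : v ∈ M ↔ SameClique G P r v := by
  obtain ⟨hMP, hMc, hmax⟩ := hM
  have hsub : M ⊆ {v | SameClique G P r v} := fun v hv =>
    or_iff_not_imp_left.2 fun hne => ⟨hMP hr, hMP hv, hMc hr hv hne⟩
  obtain ⟨hCP, hCc, -⟩ := hP.isMaxCliqueIn_setOf_sameClique (hMP hr)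
  exact Set.ext_iff.1 (hmax _ hCP hCc hsub) v

lemma IsMaxCliqueIn.nonempty_s8 (hM : IsMaxCliqueIn G P M) (hP : P.Nonempty) : M.Nonempty := by
  obtain ⟨v, hv⟩ := hP
  by_contra! rfl
  exact Set.singleton_ne_empty v
    (hM.2.2 {v} (Set.singleton_subset_iff.2 hv) (by simp) (Set.empty_subset _)).symm

lemma IsMaxCliqueIn.map_mem_iff_s8 (hM : IsMaxCliqueIn G P M) (hM' : IsMaxCliqueIn G P M')
    (hP : IsUnionOfCliques G P) (ψ : G ≃g G) (hψ : ∀ v, ψ v ∈ P ↔ v ∈ P) (hr : r ∈ M)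
    (hr' : ψ r ∈ M') : ψ v ∈ M' ↔ v ∈ M := by
  rw [hM.mem_iff_sameClique hP hr, hM'.mem_iff_sameClique hP hr', sameClique_map_iff ψ hψ]

lemma IsUnionOfCliques.exists_adj_of_one_lt_mk (hP : IsUnionOfCliques G P) (hne : P.Nonempty)
    (hcard : ∀ M, IsMaxCliqueIn G P M → 1 < Cardinal.mk M) : ∃ u ∈ P, ∃ v ∈ P, G.Adj u v := by
  obtain ⟨r, hr⟩ := hne
  have hC := hP.isMaxCliqueIn_setOf_sameClique hr
  have := Cardinal.one_lt_iff_nontrivial.1 (hcard _ hC)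
  obtain ⟨⟨u, hu⟩, ⟨v, hv⟩, huv⟩ := exists_pair_ne {v | SameClique G P r v}
  exact ⟨u, hC.1 hu, v, hC.1 hv, hC.2.1 hu hv fun h => huv (Subtype.ext h)⟩

end Cliques

section BlowUp

variable {U : Type} {H : SimpleGraph U} {redH : U → Prop} {I : Type}

/-- The projection of a blow-up of `H` onto `H`, sending each vertex of a clique to the red vertex
that was replaced by this clique. -/
def blowUpProj (redH : U → Prop) (I : Type) : {u // redH u} × I ⊕ {u // ¬ redH u} → U :=
  Sum.elim (fun p => p.1.1) Subtype.val

lemma blowUp_adj_iff (x y : {u // redH u} × I ⊕ {u // ¬ redH u}) :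
    (blowUp H redH I).Adj x y ↔ H.Adj (blowUpProj redH I x) (blowUpProj redH I y) ∨
      blowUpProj redH I x = blowUpProj redH I y ∧ x ≠ y := by
  rcases x with ⟨⟨u, hu⟩, i⟩ | ⟨b, hb⟩ <;> rcases y with ⟨⟨u', hu'⟩, i'⟩ | ⟨b', hb'⟩ <;>
    simp only [blowUp, SimpleGraph.fromRel_adj, blowUpProj, Sum.elim_inl, Sum.elim_inr]
  all_goals grind [SimpleGraph.adj_comm, SimpleGraph.irrefl]

lemma blowUpRed_iff (x : {u // redH u} × I ⊕ {u // ¬ redH u}) :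
    blowUpRed U redH I x ↔ redH (blowUpProj redH I x) := by
  rcases x with ⟨u, -⟩ | u
  · exact iff_of_true trivial u.2
  · exact iff_of_false id u.2

lemma nonempty_equiv_blowUpProj_fiber {u : U} (hu : redH u) :
    Nonempty (I ≃ {x // blowUpProj redH I x = u}) := by
  refine ⟨Equiv.ofBijective (fun i => ⟨Sum.inl (⟨u, hu⟩, i), rfl⟩) ⟨fun i j h => ?_, ?_⟩⟩
  · exact congrArg Prod.snd (Sum.inl_injective (congrArg Subtype.val h))
  · rintro ⟨⟨_, i⟩ | b, rfl⟩
    · exact ⟨i, rfl⟩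
    · exact absurd hu b.2

lemma existsUnique_blowUpProj_eq {u : U} (hu : ¬ redH u) :
    ∃! x, blowUpProj redH I x = u := by
  refine ⟨Sum.inr ⟨u, hu⟩, rfl, ?_⟩
  rintro (⟨r, i⟩ | b) rfl
  · exact absurd r.2 hu
  · rfl

lemma isBlowUpOf_of_fibers {V : Type} {G : SimpleGraph V} {red : V → Prop} [Countable I]
    [Nontrivial I] (hind : ∀ u v, redH u → redH v → ¬ H.Adj u v) (p : V → U)
    (hadj : ∀ u v, G.Adj u v ↔ H.Adj (p u) (p v) ∨ p u = p v ∧ u ≠ v)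
    (hcol : ∀ v, red v ↔ redH (p v)) (hred : ∀ u, redH u → Nonempty ({v // p v = u} ≃ I))
    (hblue : ∀ u, ¬ redH u → ∃! v, p v = u) : IsBlowUpOf G red := by
  have hfiber : ∀ u, Nonempty ({v // p v = u} ≃ {x // blowUpProj redH I x = u}) := fun u => by
    by_cases hu : redH u
    · exact (hred u hu).map2 Equiv.trans (nonempty_equiv_blowUpProj_fiber hu)
    · obtain ⟨_⟩ := (unique_subtype_iff_existsUnique _).2 (hblue u hu)
      obtain ⟨_⟩ := (unique_subtype_iff_existsUnique _).2
        (existsUnique_blowUpProj_eq (redH := redH) (I := I) hu)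
      exact ⟨Equiv.ofUnique _ _⟩
  let e := Equiv.ofFiberEquiv fun u => (hfiber u).some
  have he : ∀ v, blowUpProj redH I (e v) = p v := Equiv.ofFiberEquiv_map _
  refine ⟨U, H, redH, I, hind, Cardinal.two_le_iff.2 (exists_pair_ne I), Cardinal.mk_le_aleph0,
    ⟨e, ?_⟩, fun v => ?_⟩
  · intro u v
    rw [blowUp_adj_iff, he, he, e.injective.ne_iff, hadj]
  · rw [hcol, ← he]
    exact (blowUpRed_iff (e v)).symm

end BlowUp

section Ultrahomogeneous

variable {V : Type} {G : SimpleGraph V} {red : V → Prop}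

/-- The blue vertex `b` distinguishes the ends of the red edge `uv`: it is adjacent to `u` but not
to `v`. -/
def SplitsRedEdge (G : SimpleGraph V) (red : V → Prop) (b u v : V) : Prop :=
  ¬ red b ∧ red u ∧ red v ∧ G.Adj u v ∧ G.Adj b u ∧ ¬ G.Adj b v

namespace Ultrahomogeneous

lemma exists_iso_map_pair (hU : Ultrahomogeneous G red) {u v u' v' : V} (heq : u = v ↔ u' = v')
    (hu : red u' ↔ red u) (hv : red v' ↔ red v) (hadj : G.Adj u' v' ↔ G.Adj u v) :
    ∃ ψ : G ≃g G, (∀ w, red (ψ w) ↔ red w) ∧ ψ u = u' ∧ ψ v = v' := by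
  classical
  let f : V → V := fun w => if w = u then u' else v'
  have hfu : f u = u' := if_pos rfl
  have hfv : f v = v' := by grind
  have hf : IsPartialIso G red {u, v} f := by
    refine ⟨?_, ?_, ?_⟩
    · grind [Set.InjOn]
    · simp [hfu, hfv, hu, hv]
    · simp [hfu, hfv, hadj, G.adj_comm v, G.adj_comm v']
  obtain ⟨ψ, hψ, hψf⟩ := hU {u, v} (Set.toFinite _) f hf
  exact ⟨ψ, hψ, (hψf u (by simp)).trans hfu, (hψf v (by simp)).trans hfv⟩

lemma exists_iso_map (hU : Ultrahomogeneous G red) {u u' : V} (hu : red u' ↔ red u) :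
    ∃ ψ : G ≃g G, (∀ w, red (ψ w) ↔ red w) ∧ ψ u = u' := by
  obtain ⟨ψ, hψ, hψu, -⟩ := hU.exists_iso_map_pair (u := u) (v := u) (u' := u') (v' := u')
    (by simp) hu hu (by simp)
  exact ⟨ψ, hψ, hψu⟩

lemma nonempty_sameClique_equiv (hU : Ultrahomogeneous G red) {r s : V} (hrs : red s ↔ red r) :
    Nonempty ({v // SameClique G {v | red v} v r} ≃ {v // SameClique G {v | red v} v s}) := by
  obtain ⟨ψ, hψ, rfl⟩ := hU.exists_iso_map hrs
  exact ⟨ψ.toEquiv.subtypeEquiv fun v => (sameClique_map_iff ψ hψ).symm⟩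

lemma exists_adj_of_splitsRedEdge (hU : Ultrahomogeneous G red) {b₀ u v : V}
    (hsplit : SplitsRedEdge G red b₀ u v) {b r : V} (hb : ¬ red b) (hr : red r) :
    ∃ s, red s ∧ G.Adj r s ∧ (G.Adj b s ↔ ¬ G.Adj b r) := by
  obtain ⟨hb₀, hu, hv, huv, hbu, hbv⟩ := hsplit
  obtain ⟨w, w', hw, hw', hww', hbw, hbw'⟩ : ∃ w w', red w ∧ red w' ∧ G.Adj w w' ∧
      (G.Adj b r ↔ G.Adj b₀ w) ∧ (G.Adj b₀ w' ↔ ¬ G.Adj b r) := by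
    by_cases hbr : G.Adj b r
    · exact ⟨u, v, hu, hv, huv, by simp [hbr, hbu], by simp [hbr, hbv]⟩
    · exact ⟨v, u, hv, hu, huv.symm, by simp [hbr, hbv], by simp [hbr, hbu]⟩
  obtain ⟨ψ, hψ, rfl, rfl⟩ := hU.exists_iso_map_pair (u := b₀) (v := w) (u' := b) (v' := r)
    (iff_of_false (fun h => hb₀ (h ▸ hw)) fun h => hb (h ▸ hr)) (iff_of_false hb hb₀)
    (iff_of_true hr hw) hbw
  exact ⟨ψ w', (hψ w').2 hw', ψ.map_adj_iff.2 hww', by rwa [ψ.map_adj_iff]⟩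

lemma exists_adj_and_exists_not_adj_of_splitsRedEdge (hU : Ultrahomogeneous G red)
    (hR : IsUnionOfCliques G {v | red v}) {b₀ u v : V} (hsplit : SplitsRedEdge G red b₀ u v)
    {b : V} (hb : ¬ red b) {M : Set V} (hM : IsMaxCliqueIn G {v | red v} M) :
    (∃ u ∈ M, G.Adj b u) ∧ ∃ u ∈ M, ¬ G.Adj b u := by
  obtain ⟨r, hrM⟩ := hM.nonempty_s8 ⟨u, hsplit.2.1⟩
  obtain ⟨s, hs, hrs, hbs⟩ := hU.exists_adj_of_splitsRedEdge hsplit hb (hM.1 hrM)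
  have hsM : s ∈ M := (hM.mem_iff_sameClique hR hrM).2 (Or.inr ⟨hM.1 hrM, hs, hrs⟩)
  by_cases hbr : G.Adj b r
  · exact ⟨⟨r, hrM, hbr⟩, s, hsM, fun h => hbs.1 h hbr⟩
  · exact ⟨⟨s, hsM, hbs.2 hbr⟩, r, hrM, hbr⟩

lemma exists_induce_union_iso (hU : Ultrahomogeneous G red)
    (hR : IsUnionOfCliques G {v | red v}) (hB : IsUnionOfCliques G {v | ¬ red v})
    {MR MR' MB MB' : Set V} (hMR : IsMaxCliqueIn G {v | red v} MR)
    (hMR' : IsMaxCliqueIn G {v | red v} MR') (hMB : IsMaxCliqueIn G {v | ¬ red v} MB)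
    (hMB' : IsMaxCliqueIn G {v | ¬ red v} MB') {r r' b b' : V} (hr : r ∈ MR) (hr' : r' ∈ MR')
    (hb : b ∈ MB) (hb' : b' ∈ MB') (hadj : G.Adj b' r' ↔ G.Adj b r) :
    ∃ e : G.induce (MR ∪ MB) ≃g G.induce (MR' ∪ MB'), ∀ x, red x.1 ↔ red (e x).1 := by
  obtain ⟨ψ, hψ, rfl, rfl⟩ := hU.exists_iso_map_pair (u := b) (v := r) (u' := b') (v' := r')
    (iff_of_false (fun h => hMB.1 hb (h ▸ hMR.1 hr)) fun h => hMB'.1 hb' (h ▸ hMR'.1 hr'))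
    (iff_of_false (hMB'.1 hb') (hMB.1 hb)) (iff_of_true (hMR'.1 hr') (hMR.1 hr)) hadj
  have hmem : ∀ x, x ∈ MR ∪ MB ↔ ψ x ∈ MR' ∪ MB' := fun x =>
    (or_congr (hMR.map_mem_iff_s8 hMR' hR ψ hψ hr hr')
      (hMB.map_mem_iff_s8 hMB' hB ψ (fun v => not_congr (hψ v)) hb hb')).symm
  exact ⟨⟨ψ.toEquiv.subtypeEquiv hmem, ψ.map_adj_iff⟩, fun x => (hψ x.1).symm⟩

end Ultrahomogeneous

lemma SameClique.adj_of_adj {u u' w : V} (hnosplit : ∀ b u v, ¬ SplitsRedEdge G red b u v)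
    (huu' : SameClique G {v | red v} u u') (huw : ¬ SameClique G {v | red v} u w)
    (hadj : G.Adj u w) : G.Adj u' w := by
  rcases huu' with rfl | ⟨hu, hu', huu'⟩
  · exact hadj
  have hw : ¬ red w := fun hw => huw (Or.inr ⟨hu, hw, hadj⟩)
  by_contra hu'w
  exact hnosplit w u u' ⟨hw, hu, hu', huu', hadj.symm, fun h => hu'w h.symm⟩

lemma SameClique.adj_iff_adj {u u' w w' : V} (hR : IsUnionOfCliques G {v | red v})
    (hnosplit : ∀ b u v, ¬ SplitsRedEdge G red b u v) (huu' : SameClique G {v | red v} u u')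
    (hww' : SameClique G {v | red v} w w') (huw : ¬ SameClique G {v | red v} u w) :
    G.Adj u w ↔ G.Adj u' w' := by
  have hu'w : ¬ SameClique G {v | red v} u' w := fun h => huw (huu'.trans hR h)
  have hw'u' : ¬ SameClique G {v | red v} w' u' := fun h => hu'w (hww'.trans hR h).symm
  calc G.Adj u w ↔ G.Adj u' w :=
      ⟨huu'.adj_of_adj hnosplit huw, huu'.symm.adj_of_adj hnosplit hu'w⟩
    _ ↔ G.Adj w u' := G.adj_comm _ _
    _ ↔ G.Adj w' u' :=
      ⟨hww'.adj_of_adj hnosplit fun h => hu'w h.symm, hww'.symm.adj_of_adj hnosplit hw'u'⟩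
    _ ↔ G.Adj u' w' := G.adj_comm _ _

lemma Ultrahomogeneous.isBlowUpOf_of_forall_not_splitsRedEdge [Countable V]
    (hU : Ultrahomogeneous G red) (hR : IsUnionOfCliques G {v | red v}) {r s : V} (hr : red r)
    (hs : red s) (hrs : G.Adj r s) (hnosplit : ∀ b u v, ¬ SplitsRedEdge G red b u v) :
    IsBlowUpOf G red := by
  let p : V → Quotient hR.setoid := Quotient.mk hR.setoid
  have hp {u v : V} : p u = p v ↔ SameClique G {v | red v} u v := Quotient.eq
  have hpout (c : Quotient hR.setoid) : p c.out = c := c.out_eq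
  have hout (v : V) : SameClique G {v | red v} (p v).out v := hp.1 (hpout (p v))
  have : Nontrivial {v // SameClique G {v | red v} v r} :=
    ⟨⟨r, Or.inl rfl⟩, ⟨s, Or.inr ⟨hs, hr, hrs.symm⟩⟩, fun h => hrs.ne (congrArg Subtype.val h)⟩
  refine isBlowUpOf_of_fibers (H := G.comap Quotient.out) (redH := fun c => red c.out)
    (I := {v // SameClique G {v | red v} v r}) (fun c d hc hd hcd => ?_) p (fun u v => ?_)
    (fun v => (hout v).mem_iff_mem.symm) (fun c hc => ?_) (fun c hc => ?_)
  · have hsame : SameClique G {v | red v} c.out d.out := Or.inr ⟨hc, hd, hcd⟩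
    rw [← hp, hpout, hpout] at hsame
    exact G.irrefl (hsame ▸ hcd)
  · by_cases huv : SameClique G {v | red v} u v
    · simp only [hp.2 huv, true_and, comap_adj, G.irrefl, false_or]
      exact ⟨G.ne_of_adj, fun hne => (huv.resolve_left hne).2.2⟩
    · simp only [hp, huv, false_and, or_false, comap_adj]
      exact SameClique.adj_iff_adj hR hnosplit (hout u).symm (hout v).symm huv
  · rw [← hpout c]
    simp only [hp]
    exact hU.nonempty_sameClique_equiv (iff_of_true hr hc)
  · exact ⟨c.out, hpout c, by rintro v rfl; exact (hout v).symm.eq_of_notMem hc⟩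

end Ultrahomogeneous

theorem stmt_8_general {V : Type} [Countable V] (G : SimpleGraph V) (red : V → Prop)
    (hU : Ultrahomogeneous G red) (hR : IsUnionOfCliques G {v | red v})
    (hB : IsUnionOfCliques G {v | ¬ red v}) (hnb : ¬ IsBlowUpOf G red)
    (hedge : ∃ u v, red u ∧ red v ∧ G.Adj u v) :
    (∀ b, ¬ red b → ∀ M : Set V, IsMaxCliqueIn G {v | red v} M →
      (∃ u ∈ M, G.Adj b u) ∧ (∃ u ∈ M, ¬ G.Adj b u)) ∧
    (∀ MR MR' MB MB' : Set V, IsMaxCliqueIn G {v | red v} MR →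
      IsMaxCliqueIn G {v | red v} MR' → IsMaxCliqueIn G {v | ¬ red v} MB →
      IsMaxCliqueIn G {v | ¬ red v} MB' →
      ∃ e : (G.induce (MR ∪ MB)) ≃g (G.induce (MR' ∪ MB')),
        ∀ x, red x.1 ↔ red (e x).1) := by
  obtain ⟨b₀, u, v, hsplit⟩ : ∃ b u v, SplitsRedEdge G red b u v := by
    by_contra! hnosplit
    obtain ⟨r, s, hr, hs, hrs⟩ := hedge
    exact hnb (hU.isBlowUpOf_of_forall_not_splitsRedEdge hR hr hs hrs hnosplit)
  have hmixed : ∀ b, ¬ red b → ∀ M, IsMaxCliqueIn G {v | red v} M →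
      (∃ u ∈ M, G.Adj b u) ∧ ∃ u ∈ M, ¬ G.Adj b u := fun b hb M hM =>
    hU.exists_adj_and_exists_not_adj_of_splitsRedEdge hR hsplit hb hM
  refine ⟨hmixed, fun MR MR' MB MB' hMR hMR' hMB hMB' => ?_⟩
  obtain ⟨b, hb⟩ := hMB.nonempty_s8 ⟨b₀, hsplit.1⟩
  obtain ⟨b', hb'⟩ := hMB'.nonempty_s8 ⟨b₀, hsplit.1⟩
  obtain ⟨⟨r, hr, hbr⟩, -⟩ := hmixed b (hMB.1 hb) MR hMR
  obtain ⟨⟨r', hr', hbr'⟩, -⟩ := hmixed b' (hMB'.1 hb') MR' hMR'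
  exact hU.exists_induce_union_iso hR hB hMR hMR' hMB hMB' hr hr' hb hb' (iff_of_true hbr' hbr)

/-- in a basic CUH graph omitting `D` with a non-independent color class,
if ω_R > 1 then every blue vertex has a neighbor and a non-neighbor in every maximal red
clique, and all the induced subgraphs `G[M_R ∪ M_B]` are isomorphic as colored graphs. -/
theorem stmt_8 {V : Type} (G : SimpleGraph V) (red : V → Prop)
    (hG : IsBasicCUH G red)
    (hOmD : ¬ Realizes G red Dgraph Dred)
    (hni : (∃ u v, red u ∧ red v ∧ G.Adj u v) ∨ (∃ u v, ¬ red u ∧ ¬ red v ∧ G.Adj u v))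
    (hωR : ∀ M : Set V, IsMaxCliqueIn G {v | red v} M → 1 < Cardinal.mk M) :
    (∀ b, ¬ red b → ∀ M : Set V, IsMaxCliqueIn G {v | red v} M →
      (∃ u ∈ M, G.Adj b u) ∧ (∃ u ∈ M, ¬ G.Adj b u)) ∧
    (∀ MR MR' MB MB' : Set V, IsMaxCliqueIn G {v | red v} MR →
      IsMaxCliqueIn G {v | red v} MR' → IsMaxCliqueIn G {v | ¬ red v} MB →
      IsMaxCliqueIn G {v | ¬ red v} MB' →
      ∃ e : (G.induce (MR ∪ MB)) ≃g (G.induce (MR' ∪ MB')),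
        ∀ x, red x.1 ↔ red (e x).1) := by
  obtain ⟨⟨_, -, hU, hR, hB⟩, hnb, ⟨r, -, hr, -⟩, -⟩ := hG
  obtain ⟨u, hu, v, hv, huv⟩ := hR.exists_adj_of_one_lt_mk ⟨r, hr⟩ hωR
  exact stmt_8_general G red hU hR hB (fun h => hnb (Or.inl h)) ⟨u, v, hu, hv, huv⟩
end

section
/- Let G be a basic CUH graph that omits D and in which at least one color class does not form an independent set. Then ω_R ∈ {1, 2, ℵ₀}. Moreover, if ω_R = ℵ₀, then α_B = ℵ₀ and for every blue vertex b and every maximal red clique M_R, both the set of neighbors of b in M_R and the set of non-neighbors of b in M_R are infinite. -/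
open SimpleGraph

/-!
Write `b`-type of a red vertex for its being adjacent to the blue vertex `b` or not. Since `G` is
not a blow-up, some blue vertex meets both types in some red clique, hence by homogeneity every blue
vertex does so in every red clique.

Let red cliques have at least three vertices and suppose that one of the two types is attained by
only finitely many vertices of a red clique `M`. In another red clique take `x` and `y` of distinct
`b`-types and a third vertex `w`. An automorphism taking `y` to `x` and fixing `w` and these
finitely many vertices moves `b` to a vertex `c` which agrees with `b` on `M` and at `w`, but not at
`x`. An automorphism that fixes `b` and `c` and takes `w` into `M` shows that this is impossible.

If red cliques are infinite, then moreover every finite pattern of adjacencies on a red clique is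
attained by a blue vertex. For distinct `m, s₀, s₁, …` in one red clique choose blue vertices `bᵢ`
adjacent to `m` and `sᵢ` but to no `sⱼ` with `j < i`. An edge `bᵢbⱼ` with `j < i` would give a copy
of `D` on `m, sⱼ, bⱼ, bᵢ`, so the `bᵢ` are independent.
-/

open Cardinal

section

variable {V : Type} {G : SimpleGraph V} {red : V → Prop}

/-- Lying in the same maximal red clique. Every vertex, including a blue one, is related to itself,
so that this is an equivalence relation on all of `V` when the red class is a union of cliques. -/
def SameRedClique (G : SimpleGraph V) (red : V → Prop) (u v : V) : Prop :=
  u = v ∨ red u ∧ red v ∧ G.Adj u v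

namespace SameRedClique

variable {u v w : V}

theorem refl (u : V) : SameRedClique G red u u := Or.inl rfl

theorem symm (h : SameRedClique G red u v) : SameRedClique G red v u :=
  h.imp Eq.symm fun ⟨hu, hv, huv⟩ => ⟨hv, hu, huv.symm⟩

theorem trans (hR : IsUnionOfCliques G {v | red v}) (huv : SameRedClique G red u v)
    (hvw : SameRedClique G red v w) : SameRedClique G red u w := by
  rcases huv with rfl | ⟨hu, hv, huv⟩
  · exact hvw
  rcases hvw with rfl | ⟨-, hw, hvw⟩
  · exact Or.inr ⟨hu, hv, huv⟩
  · exact or_iff_not_imp_left.2 fun huw => ⟨hu, hw, hR u hu v hv w hw huv hvw huw⟩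

theorem red_iff (h : SameRedClique G red u v) : red u ↔ red v := by
  rcases h with rfl | ⟨hu, hv, -⟩
  · rfl
  · exact iff_of_true hu hv

theorem map {ψ : G ≃g G} (hψ : ∀ v, red (ψ v) ↔ red v) (h : SameRedClique G red u v) :
    SameRedClique G red (ψ u) (ψ v) :=
  h.imp (congrArg ψ) fun ⟨hu, hv, huv⟩ => ⟨(hψ u).2 hu, (hψ v).2 hv, ψ.map_adj_iff.2 huv⟩

theorem map_iff {ψ : G ≃g G} (hψ : ∀ v, red (ψ v) ↔ red v) :
    SameRedClique G red (ψ u) (ψ v) ↔ SameRedClique G red u v := by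
  rw [SameRedClique, SameRedClique, ψ.injective.eq_iff, hψ, hψ, ψ.map_adj_iff]

theorem map_iff_of_apply_eq_self (hR : IsUnionOfCliques G {v | red v}) {ψ : G ≃g G}
    (hψ : ∀ v, red (ψ v) ↔ red v) (huw : SameRedClique G red u w) (hw : ψ w = w) :
    SameRedClique G red u (ψ v) ↔ SameRedClique G red u v := by
  have hwv := map_iff (G := G) hψ (u := w) (v := v)
  rw [hw] at hwv
  exact ⟨fun h => huw.trans hR (hwv.1 (huw.symm.trans hR h)),
    fun h => huw.trans hR (hwv.2 (huw.symm.trans hR h))⟩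

theorem adj_iff_adj (hR : IsUnionOfCliques G {v | red v}) (huv : SameRedClique G red u v)
    (hw : red w) (hwu : w ≠ u) (hwv : w ≠ v) : G.Adj w u ↔ G.Adj w v := by
  rcases huv with rfl | ⟨hu, hv, huv⟩
  · rfl
  · exact ⟨fun h => hR w hw u hu v hv h huv hwv, fun h => hR w hw v hv u hu h huv.symm hwu⟩

end SameRedClique

theorem adj_iff_sameRedClique_and_ne {u v : V} (hu : red u) (hv : red v) :
    G.Adj u v ↔ SameRedClique G red u v ∧ u ≠ v :=
  ⟨fun h => ⟨Or.inr ⟨hu, hv, h⟩, h.ne⟩, fun ⟨h, hne⟩ => (h.resolve_left hne).2.2⟩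

namespace IsUnionOfCliques

/-- The equivalence relation whose classes are the maximal red cliques and the singletons of blue
vertices. -/
def redCliqueSetoid (hR : IsUnionOfCliques G {v | red v}) : Setoid V where
  r := SameRedClique G red
  iseqv := ⟨SameRedClique.refl, SameRedClique.symm, SameRedClique.trans hR⟩

theorem isClique_setOf_sameRedClique (hR : IsUnionOfCliques G {v | red v}) (u : V) :
    G.IsClique {v | SameRedClique G red u v} := fun _ hv _ hw hne =>
  ((hv.symm.trans hR hw).resolve_left hne).2.2

theorem isMaxCliqueIn_iff (hR : IsUnionOfCliques G {v | red v}) (hne : {v | red v}.Nonempty)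
    {M : Set V} : IsMaxCliqueIn G {v | red v} M ↔
      ∃ u, red u ∧ M = {v | SameRedClique G red u v} := by
  have subset_class {K : Set V} {u : V} (hKred : K ⊆ {v | red v}) (hK : G.IsClique K)
      (hu : u ∈ K) : K ⊆ {v | SameRedClique G red u v} := fun v hv =>
    or_iff_not_imp_left.2 fun huv => ⟨hKred hu, hKred hv, hK hu hv huv⟩
  have class_subset {u : V} (hu : red u) : {v | SameRedClique G red u v} ⊆ {v | red v} :=
    fun v hv => hv.red_iff.1 hu
  constructor
  · rintro ⟨hMred, hM, hmax⟩
    obtain ⟨u, hu⟩ : M.Nonempty := by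
      obtain ⟨r, hr⟩ := hne
      by_contra hM₀
      rw [Set.not_nonempty_iff_eq_empty] at hM₀
      exact Set.singleton_ne_empty r <| (hM₀.symm.trans <| hmax {r} (Set.singleton_subset_iff.2 hr)
        (Set.pairwise_singleton r _) (hM₀ ▸ Set.empty_subset _)).symm
    exact ⟨u, hMred hu, hmax _ (class_subset (hMred hu)) (hR.isClique_setOf_sameRedClique u)
      (subset_class hMred hM hu)⟩
  · rintro ⟨u, hu, rfl⟩
    exact ⟨class_subset hu, hR.isClique_setOf_sameRedClique u, fun K hKred hK hsub =>
      hsub.antisymm (subset_class hKred hK (hsub (SameRedClique.refl u)))⟩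

end IsUnionOfCliques

theorem Ultrahomogeneous.exists_iso_apply_eq_fixing (hU : Ultrahomogeneous G red) {A : Set V}
    (hA : A.Finite) {x y : V} (hx : x ∉ A) (hy : y ∉ A) (hred : red x ↔ red y)
    (hadj : ∀ a ∈ A, G.Adj a x ↔ G.Adj a y) :
    ∃ ψ : G ≃g G, (∀ v, red (ψ v) ↔ red v) ∧ ψ x = y ∧ ∀ a ∈ A, ψ a = a := by
  classical
  let f := Function.update id x y
  have hfx : f x = y := Function.update_self ..
  have hfA (a : V) (ha : a ∈ A) : f a = a :=
    Function.update_of_ne (ne_of_mem_of_not_mem ha hx) ..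
  have hf : IsPartialIso G red (insert x A) f := by
    refine ⟨?_, ?_, ?_⟩
    · rintro u (rfl | hu) v (rfl | hv) <;> grind
    · rintro v (rfl | hv) <;> grind
    · rintro u (rfl | hu) v (rfl | hv) <;> grind [G.adj_comm, G.irrefl]
  obtain ⟨ψ, hψ, hψf⟩ := hU _ (hA.insert x) f hf
  exact ⟨ψ, hψ, (hψf x (Set.mem_insert ..)).trans hfx, fun a ha =>
    (hψf a (Set.mem_insert_of_mem x ha)).trans (hfA a ha)⟩

theorem SameRedClique.exists_iso_apply_eq_fixing (hU : Ultrahomogeneous G red)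
    (hR : IsUnionOfCliques G {v | red v}) {A : Set V} {x y : V} (hxy : SameRedClique G red x y)
    (hA : A.Finite) (hAred : ∀ a ∈ A, red a) (hx : x ∉ A) (hy : y ∉ A) :
    ∃ ψ : G ≃g G, (∀ v, red (ψ v) ↔ red v) ∧ ψ x = y ∧ ∀ a ∈ A, ψ a = a :=
  hU.exists_iso_apply_eq_fixing hA hx hy hxy.red_iff fun a ha => hxy.adj_iff_adj hR (hAred a ha)
    (ne_of_mem_of_not_mem ha hx) (ne_of_mem_of_not_mem ha hy)

theorem Ultrahomogeneous.exists_iso_apply_eq (hU : Ultrahomogeneous G red) {x y : V}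
    (hred : red x ↔ red y) : ∃ ψ : G ≃g G, (∀ v, red (ψ v) ↔ red v) ∧ ψ x = y := by
  obtain ⟨ψ, hψ, hxy, -⟩ := hU.exists_iso_apply_eq_fixing Set.finite_empty (Set.notMem_empty x)
    (Set.notMem_empty y) hred (by simp)
  exact ⟨ψ, hψ, hxy⟩

theorem Ultrahomogeneous.mk_setOf_sameRedClique_eq (hU : Ultrahomogeneous G red) {u v : V}
    (hu : red u) (hv : red v) :
    #{x | SameRedClique G red u x} = #{x | SameRedClique G red v x} := by
  obtain ⟨ψ, hψ, rfl⟩ := hU.exists_iso_apply_eq (iff_of_true hu hv)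
  exact mk_congr (ψ.toEquiv.subtypeEquiv fun x => (SameRedClique.map_iff hψ).symm)

section BlowUp

variable {U I : Type} {H : SimpleGraph U} {redH : U → Prop}

theorem blowUp_adj_inl_inl (hH : ∀ u v, redH u → redH v → ¬ H.Adj u v)
    {u v : {u // redH u}} {i j : I} :
    (blowUp H redH I).Adj (Sum.inl (u, i)) (Sum.inl (v, j)) ↔ u = v ∧ i ≠ j := by
  have huv := hH u.1 v.1 u.2 v.2
  have hvu := hH v.1 u.1 v.2 u.2
  simp only [blowUp, fromRel_adj, huv, hvu, false_or, ne_eq, Sum.inl.injEq, Prod.mk.injEq]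
  tauto

theorem blowUp_adj_inl_inr {u : {u // redH u}} {i : I} {b : {u // ¬ redH u}} :
    (blowUp H redH I).Adj (Sum.inl (u, i)) (Sum.inr b) ↔ H.Adj u b := by
  simp [blowUp, H.adj_comm b.1 u.1]

theorem blowUp_adj_inr_inr {b c : {u // ¬ redH u}} :
    (blowUp H redH I).Adj (Sum.inr b) (Sum.inr c) ↔ H.Adj b c := by
  simp only [blowUp, fromRel_adj, H.adj_comm c.1 b.1, or_self, ne_eq, Sum.inr.injEq,
    and_iff_right_iff_imp]
  exact fun h hbc => h.ne (congrArg Subtype.val hbc)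

theorem isBlowUpOf_of_bijective (hH : ∀ u v, redH u → redH v → ¬ H.Adj u v)
    (hI : 2 ≤ #I) (hI' : #I ≤ ℵ₀) {F : {u // redH u} × I ⊕ {u // ¬ redH u} → V}
    (hF : Function.Bijective F) (hred : ∀ x, red (F x) ↔ blowUpRed U redH I x)
    (hRR : ∀ u i v j, G.Adj (F (Sum.inl (u, i))) (F (Sum.inl (v, j))) ↔ u = v ∧ i ≠ j)
    (hRB : ∀ u i b, G.Adj (F (Sum.inl (u, i))) (F (Sum.inr b)) ↔ H.Adj u b)
    (hBB : ∀ b c, G.Adj (F (Sum.inr b)) (F (Sum.inr c)) ↔ H.Adj b c) :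
    IsBlowUpOf G red := by
  have hadj : ∀ x y, G.Adj (F x) (F y) ↔ (blowUp H redH I).Adj x y := by
    rintro (⟨u, i⟩ | b) (⟨v, j⟩ | c)
    · rw [hRR, blowUp_adj_inl_inl hH]
    · rw [hRB, blowUp_adj_inl_inr]
    · rw [G.adj_comm, (blowUp H redH I).adj_comm, hRB, blowUp_adj_inl_inr]
    · rw [hBB, blowUp_adj_inr_inr]
  let e : blowUp H redH I ≃g G := ⟨Equiv.ofBijective F hF, hadj _ _⟩
  have hFe (v : V) : F (e.symm v) = v := e.apply_symm_apply v
  exact ⟨U, H, redH, I, hH, hI, hI', e.symm, fun v => by rw [← hred, hFe]⟩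

end BlowUp

theorem IsUnionOfCliques.exists_bijective_quotient_prod (hR : IsUnionOfCliques G {v | red v})
    {I : Type} (hcard : ∀ u, red u → #{v | SameRedClique G red u v} = #I) :
    ∃ F : {q : Quotient hR.redCliqueSetoid // red q.out} × I ⊕
        {q : Quotient hR.redCliqueSetoid // ¬ red q.out} → V,
      Function.Bijective F ∧ (∀ q i, SameRedClique G red q.1.out (F (Sum.inl (q, i)))) ∧
        ∀ q, F (Sum.inr q) = q.1.out := by
  have out_mk (v : V) : SameRedClique G red (Quotient.mk hR.redCliqueSetoid v).out v :=
    Quotient.mk_out (s := hR.redCliqueSetoid) v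
  let label (q : {q : Quotient hR.redCliqueSetoid // red q.out}) :
      {v | SameRedClique G red q.1.out v} ≃ I := (Cardinal.eq.1 (hcard _ q.2)).some
  have same_out q i : SameRedClique G red q.1.out ((label q).symm i) := ((label q).symm i).2
  refine ⟨Sum.elim (fun p => (label p.1).symm p.2) fun q => q.1.out, ⟨?_, ?_⟩, same_out,
    fun _ => rfl⟩
  · rintro (⟨p, i⟩ | p) (⟨q, j⟩ | q) h <;> simp only [Sum.elim_inl, Sum.elim_inr] at h
    · have hpq : SameRedClique G red p.1.out q.1.out :=
        (same_out p i).trans hR (h ▸ (same_out q j).symm)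
      obtain rfl : p = q := Subtype.ext (Quotient.out_equiv_out.1 hpq)
      rw [(label p).symm.injective (Subtype.ext h)]
    · exact absurd (h ▸ (same_out p i).red_iff.1 p.2) q.2
    · exact absurd (h ▸ (same_out q j).red_iff.1 q.2) p.2
    · rw [Subtype.ext (Quotient.out_injective h)]
  · intro v
    by_cases hv : red v
    · let q : {q : Quotient hR.redCliqueSetoid // red q.out} := ⟨_, (out_mk v).red_iff.2 hv⟩
      exact ⟨Sum.inl (q, label q ⟨v, out_mk v⟩), by simp⟩
    · exact ⟨Sum.inr ⟨_, mt (out_mk v).red_iff.1 hv⟩, (out_mk v).resolve_right fun h => hv h.2.1⟩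

theorem IsUnionOfCliques.isBlowUpOf (hR : IsUnionOfCliques G {v | red v}) {I : Type}
    (hI : 2 ≤ #I) (hI' : #I ≤ ℵ₀) (hcard : ∀ u, red u → #{v | SameRedClique G red u v} = #I)
    (htwin : ∀ b u v, ¬ red b → SameRedClique G red u v → (G.Adj b u ↔ G.Adj b v)) :
    IsBlowUpOf G red := by
  obtain ⟨F, hF, same_out, F_inr⟩ := hR.exists_bijective_quotient_prod hcard
  have red_inl q i : red (F (Sum.inl (q, i))) := (same_out q i).red_iff.1 q.2
  -- The blown-up graph is induced on a set of representatives of the red cliques and all blue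
  -- vertices.
  refine isBlowUpOf_of_bijective (H := G.comap Quotient.out) (redH := fun q => red q.out)
    ?_ hI hI' hF ?_ ?_ ?_ ?_
  · intro p q hp hq hpq
    exact hpq.ne (Quotient.out_equiv_out.1 (Or.inr ⟨hp, hq, hpq⟩))
  · rintro (⟨q, i⟩ | q)
    · exact iff_of_true (red_inl q i) trivial
    · exact iff_of_false (F_inr q ▸ q.2) id
  · intro p i q j
    have same_iff : SameRedClique G red (F (Sum.inl (p, i))) (F (Sum.inl (q, j))) ↔ p = q := by
      refine ⟨fun h => Subtype.ext (Quotient.out_equiv_out.1 ?_), ?_⟩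
      · exact (same_out p i).trans hR (h.trans hR (same_out q j).symm)
      · rintro rfl
        exact (same_out p i).symm.trans hR (same_out p j)
    rw [adj_iff_sameRedClique_and_ne (red_inl p i) (red_inl q j), same_iff, hF.1.ne_iff]
    refine and_congr_right ?_
    rintro rfl
    simp
  · intro q i b
    rw [F_inr, comap_adj, G.adj_comm, G.adj_comm q.1.out]
    exact (htwin _ _ _ b.2 (same_out q i)).symm
  · intro b c
    rw [F_inr, F_inr]
    rfl

/-- The vertex `b` splits the red clique of `u`: it has both a neighbor and a non-neighbor in it,
that is, `G.Adj b x` takes both truth values as `x` ranges over the clique. -/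
def Splits (G : SimpleGraph V) (red : V → Prop) (b u : V) : Prop :=
  ∀ p : Prop, ∃ x, SameRedClique G red u x ∧ (G.Adj b x ↔ p)

theorem exists_splits_of_not_isBlowUpOf [Countable V] (hU : Ultrahomogeneous G red)
    (hR : IsUnionOfCliques G {v | red v}) (hG : ¬ IsBlowUpOf G red) {r : V} (hr : red r)
    (hω : 2 ≤ #{v | SameRedClique G red r v}) :
    ∃ b u, ¬ red b ∧ red u ∧ Splits G red b u := by
  by_contra! hsplit
  refine hG (hR.isBlowUpOf hω mk_le_aleph0 (fun u hu => hU.mk_setOf_sameRedClique_eq hu hr) ?_)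
  intro b u v hb huv
  by_cases hu : red u
  swap
  · rw [huv.resolve_right fun h => hu h.1]
  by_contra hbuv
  refine hsplit b u hb hu fun p => ?_
  by_cases hp : G.Adj b u ↔ p
  · exact ⟨u, SameRedClique.refl u, hp⟩
  · exact ⟨v, huv, by tauto⟩

namespace Ultrahomogeneous

theorem exists_iso_apply_eq_fixing_blue_pair (hU : Ultrahomogeneous G red) {b c x y : V}
    (hb : ¬ red b) (hc : ¬ red c) (hx : red x) (hy : red y) (hbxy : G.Adj b x ↔ G.Adj b y)
    (hcxy : G.Adj c x ↔ G.Adj c y) :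
    ∃ ψ : G ≃g G, (∀ v, red (ψ v) ↔ red v) ∧ ψ x = y ∧ ψ b = b ∧ ψ c = c := by
  have notMem {z : V} (hz : red z) : z ∉ ({b, c} : Set V) := by rintro (rfl | rfl) <;> contradiction
  obtain ⟨ψ, hψ, hψx, hψfix⟩ := hU.exists_iso_apply_eq_fixing (Set.toFinite {b, c}) (notMem hx)
    (notMem hy) (iff_of_true hx hy) (by simp [hbxy, hcxy])
  exact ⟨ψ, hψ, hψx, hψfix b (by simp), hψfix c (by simp)⟩

theorem splits_of_splits (hU : Ultrahomogeneous G red) (hR : IsUnionOfCliques G {v | red v})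
    {b c u v : V} (hb : ¬ red b) (hc : ¬ red c) (hu : red u) (hv : red v)
    (h : Splits G red b u) : Splits G red c v := by
  obtain ⟨ψ, hψ, rfl⟩ := hU.exists_iso_apply_eq (iff_of_false hb hc)
  intro p
  obtain ⟨x, hux, hx⟩ := h (G.Adj (ψ b) v)
  obtain ⟨y, huy, hy⟩ := h p
  have hxv : G.Adj (ψ b) (ψ x) ↔ G.Adj (ψ b) v := ψ.map_adj_iff.trans hx
  obtain ⟨φ, hφ, hφx, hφb, -⟩ := hU.exists_iso_apply_eq_fixing_blue_pair hc hc
    ((hψ x).2 (hux.red_iff.1 hu)) hv hxv hxv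
  refine ⟨φ (ψ y), hφx ▸ ((hux.symm.trans hR huy).map hψ).map hφ, ?_⟩
  calc G.Adj (ψ b) (φ (ψ y)) ↔ G.Adj (φ (ψ b)) (φ (ψ y)) := by rw [hφb]
    _ ↔ G.Adj b y := φ.map_adj_iff.trans ψ.map_adj_iff
    _ ↔ p := hy

theorem adj_iff_adj_of_agree_on_clique (hU : Ultrahomogeneous G red)
    (hR : IsUnionOfCliques G {v | red v}) {b c m w x : V} (hb : ¬ red b) (hc : ¬ red c)
    (hm : red m) (hw : red w) (hbm : Splits G red b m)
    (hagree : ∀ v, SameRedClique G red m v → (G.Adj b v ↔ G.Adj c v))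
    (hagree_w : G.Adj b w ↔ G.Adj c w) (hwx : SameRedClique G red w x) :
    G.Adj b x ↔ G.Adj c x := by
  obtain ⟨z, hmz, hbz⟩ := hbm (G.Adj b w)
  have hcz : G.Adj c w ↔ G.Adj c z := by rw [← hagree_w, ← hbz, hagree z hmz]
  obtain ⟨φ, hφ, hφw, hφb, hφc⟩ := hU.exists_iso_apply_eq_fixing_blue_pair hb hc hw
    (hmz.red_iff.1 hm) hbz.symm hcz
  have hmx : SameRedClique G red m (φ x) := hmz.trans hR (hφw ▸ hwx.map hφ)
  calc G.Adj b x ↔ G.Adj b (φ x) := by rw [← φ.map_adj_iff, hφb]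
    _ ↔ G.Adj c (φ x) := hagree _ hmx
    _ ↔ G.Adj c x := by rw [← φ.map_adj_iff (w := x), hφc]

end Ultrahomogeneous

theorem adj_apply_iff_adj_of_fixes_type {M : Set V} {ψ : G ≃g G} {b : V} {p : Prop}
    (hM : ∀ v, ψ v ∈ M ↔ v ∈ M) (hfix : ∀ v ∈ M, (G.Adj b v ↔ p) → ψ v = v) {v : V}
    (hv : v ∈ M) : G.Adj b v ↔ G.Adj (ψ b) v := by
  obtain ⟨u, rfl⟩ := ψ.surjective v
  have same_type : (G.Adj b (ψ u) ↔ p) ↔ (G.Adj b u ↔ p) :=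
    ⟨fun h => ψ.injective (hfix _ hv h) ▸ h, fun h => (hfix u ((hM u).1 hv) h).symm ▸ h⟩
  rw [ψ.map_adj_iff]
  tauto

theorem exists_not_sameRedClique (hR : IsUnionOfCliques G {v | red v})
    (hα : ∃ u v, red u ∧ red v ∧ u ≠ v ∧ ¬ G.Adj u v) (m : V) :
    ∃ u, red u ∧ ¬ SameRedClique G red u m := by
  obtain ⟨u, v, hu, hv, hne, hadj⟩ := hα
  by_contra! h
  exact hadj ((adj_iff_sameRedClique_and_ne hu hv).2 ⟨(h u hu).trans hR (h v hv).symm, hne⟩)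

theorem Ultrahomogeneous.infinite_setOf_adj_iff (hU : Ultrahomogeneous G red)
    (hR : IsUnionOfCliques G {v | red v})
    (hα : ∃ u v, red u ∧ red v ∧ u ≠ v ∧ ¬ G.Adj u v)
    (hω : ∀ u, red u → 3 ≤ #{v | SameRedClique G red u v}) {b m : V} (hb : ¬ red b)
    (hm : red m) (hsplit : ∀ u, red u → Splits G red b u) (p : Prop) :
    {v | SameRedClique G red m v ∧ (G.Adj b v ↔ p)}.Infinite := by
  intro hfin
  obtain ⟨u, hu, hum⟩ := exists_not_sameRedClique hR hα m
  obtain ⟨x, hux, hbx⟩ := hsplit u hu True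
  obtain ⟨y, huy, hby⟩ := hsplit u hu False
  obtain ⟨⟨w, huw⟩, hwx, hwy⟩ := exists_ne_ne_of_three_le (hω u hu) ⟨x, hux⟩ ⟨y, huy⟩
  replace hwx : w ≠ x := fun h => hwx (Subtype.ext h)
  replace hwy : w ≠ y := fun h => hwy (Subtype.ext h)
  set A := insert w {v | SameRedClique G red m v ∧ (G.Adj b v ↔ p)}
  have notMem {z : V} (huz : SameRedClique G red u z) (hwz : w ≠ z) : z ∉ A := by
    rintro (rfl | ⟨hmz, -⟩)
    · exact hwz rfl
    · exact hum (huz.trans hR hmz.symm)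
  have red_of_mem {a : V} (ha : a ∈ A) : red a := by
    rcases ha with rfl | ⟨hma, -⟩
    · exact huw.red_iff.1 hu
    · exact hma.red_iff.1 hm
  have hyx : SameRedClique G red y x := huy.symm.trans hR hux
  obtain ⟨ψ, hψ, hψy, hψA⟩ := hyx.exists_iso_apply_eq_fixing hU hR (hfin.insert w)
    (fun _ => red_of_mem) (notMem huy hwy) (notMem hux hwx)
  obtain ⟨a, hma, hba⟩ := hsplit m hm p
  have hagree (v : V) (hv : SameRedClique G red m v) : G.Adj b v ↔ G.Adj (ψ b) v :=
    adj_apply_iff_adj_of_fixes_type (M := {v | SameRedClique G red m v})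
      (fun _ => hma.map_iff_of_apply_eq_self hR hψ (hψA a (Or.inr ⟨hma, hba⟩)))
      (fun v hmv hbv => hψA v (Or.inr ⟨hmv, hbv⟩)) hv
  have hagree_w : G.Adj b w ↔ G.Adj (ψ b) w := by
    rw [← ψ.map_adj_iff, hψA w (Set.mem_insert ..)]
  have hagree_x := hU.adj_iff_adj_of_agree_on_clique hR hb (mt (hψ b).1 hb) hm
    (huw.red_iff.1 hu) (hsplit m hm) hagree hagree_w (huw.symm.trans hR hux)
  rw [← hψy, ψ.map_adj_iff, hψy] at hagree_x
  exact hby.1 (hagree_x.1 (hbx.2 trivial))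

theorem Ultrahomogeneous.exists_blue_adj_iff (hU : Ultrahomogeneous G red)
    (hR : IsUnionOfCliques G {v | red v}) {m : V} (hm : red m) (hblue : ∃ b, ¬ red b)
    (hinf : ∀ b, ¬ red b → ∀ p : Prop,
      {v | SameRedClique G red m v ∧ (G.Adj b v ↔ p)}.Infinite)
    {S : Set V} (hS : S.Finite) (hSm : S ⊆ {v | SameRedClique G red m v}) (p : V → Prop) :
    ∃ b, ¬ red b ∧ ∀ v ∈ S, G.Adj b v ↔ p v := by
  induction S, hS using Set.Finite.induction_on with
  | empty => simpa using hblue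
  | @insert u S hu hS ih =>
    obtain ⟨hmu, hSm⟩ := Set.insert_subset_iff.1 hSm
    obtain ⟨b, hb, hbS⟩ := ih hSm
    obtain ⟨v, ⟨hmv, hbv⟩, hv⟩ := (hinf b hb (p u)).exists_notMem_finite hS
    have hvu : SameRedClique G red v u := hmv.symm.trans hR hmu
    obtain ⟨ψ, hψ, rfl, hψS⟩ := hvu.exists_iso_apply_eq_fixing hU hR hS
      (fun a ha => (hSm ha).red_iff.1 hm) hv hu
    refine ⟨ψ b, mt (hψ b).1 hb, Set.forall_mem_insert.2 ⟨ψ.map_adj_iff.trans hbv, ?_⟩⟩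
    intro a ha
    calc G.Adj (ψ b) a ↔ G.Adj (ψ b) (ψ a) := by rw [hψS a ha]
      _ ↔ p a := ψ.map_adj_iff.trans (hbS a ha)

theorem adj_of_not_realizes_Dgraph (hD : ¬ Realizes G red Dgraph Dred) {x y b c : V}
    (hx : red x) (hy : red y) (hb : ¬ red b) (hc : ¬ red c) (hxy : G.Adj x y)
    (hbc : G.Adj b c) (hxb : G.Adj x b) (hxc : G.Adj x c) (hyb : G.Adj y b) : G.Adj y c := by
  by_contra hyc
  have hcy : ¬ G.Adj c y := mt G.adj_symm hyc
  refine hD ⟨![x, y, b, c], ?_, ?_, ?_⟩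
  · have hyc' : y ≠ c := fun h => hc (h ▸ hy)
    intro i j hij
    fin_cases i <;> fin_cases j <;>
      simp_all [hxy.ne, hbc.ne, hxb.ne, hxc.ne, hyb.ne, hxy.ne', hbc.ne', hxb.ne', hxc.ne',
        hyb.ne', hyc'.symm]
  · intro i
    fin_cases i <;> simp [Dred, hx, hy, hb, hc]
  · intro i j
    fin_cases i <;> fin_cases j <;>
      simp [Dgraph, hxy, hbc, hxb, hxc, hyb, hyc, hcy, hxy.symm, hbc.symm, hxb.symm, hxc.symm,
        hyb.symm]

theorem exists_infinite_isIndepIn_of_not_realizes_Dgraph (hD : ¬ Realizes G red Dgraph Dred)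
    {M : Set V} (hMred : M ⊆ {v | red v}) (hM : G.IsClique M) (hinf : M.Infinite)
    (hext : ∀ S ⊆ M, S.Finite → ∀ p : V → Prop, ∃ b, ¬ red b ∧ ∀ v ∈ S, G.Adj b v ↔ p v) :
    ∃ S : Set V, S ⊆ {v | ¬ red v} ∧ IsIndepIn G S ∧ S.Infinite := by
  obtain ⟨m, hm⟩ := hinf.nonempty
  let s := (hinf.sdiff (Set.finite_singleton m)).natEmbedding
  have hs (i : ℕ) : (s i : V) ∈ M := (s i).2.1
  have hsm (i : ℕ) : (s i : V) ≠ m := (s i).2.2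
  have hb (i : ℕ) : ∃ b, ¬ red b ∧ G.Adj b m ∧ G.Adj b (s i) ∧ ∀ j < i, ¬ G.Adj b (s j) := by
    obtain ⟨b, hb, hbp⟩ := hext (insert m ((fun j => (s j : V)) '' Set.Iic i))
      (Set.insert_subset hm (Set.image_subset_iff.2 fun j _ => hs j))
      (((Set.finite_Iic i).image _).insert m) fun v => v = m ∨ v = s i
    have hbs (j : ℕ) (hj : j ≤ i) : G.Adj b (s j) ↔ j = i := by
      rw [hbp _ (Or.inr ⟨j, hj, rfl⟩), or_iff_right (hsm j), Subtype.coe_inj, s.injective.eq_iff]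
    exact ⟨b, hb, (hbp m (Or.inl rfl)).2 (Or.inl rfl), (hbs i le_rfl).2 rfl,
      fun j hj h => hj.ne ((hbs j hj.le).1 h)⟩
  choose b hb hbm hbs hbs' using hb
  have indep {i j : ℕ} (hji : j < i) : ¬ G.Adj (b j) (b i) := fun h =>
    hbs' i j hji (adj_of_not_realizes_Dgraph hD (hMred hm) (hMred (hs j)) (hb j) (hb i)
      (hM hm (hs j) (hsm j).symm) h (hbm j).symm (hbm i).symm (hbs j).symm).symm
  refine ⟨Set.range b, Set.range_subset_iff.2 hb, ?_, Set.infinite_range_of_injective ?_⟩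
  · rintro _ ⟨i, rfl⟩ _ ⟨j, rfl⟩ h
    rcases lt_trichotomy i j with hij | rfl | hji
    · exact indep hij h
    · exact h.ne rfl
    · exact indep hji h.symm
  · exact Function.Injective.of_lt_imp_ne fun j i hji h => hbs' i j hji (h ▸ hbs j)

section NotBlowUp

variable [Countable V] (hU : Ultrahomogeneous G red) (hR : IsUnionOfCliques G {v | red v})
  (hG : ¬ IsBlowUpOf G red) (hα : ∃ u v, red u ∧ red v ∧ u ≠ v ∧ ¬ G.Adj u v)

include hU hR hG hα

theorem infinite_setOf_adj_iff_of_not_isBlowUpOf {r : V} (hr : red r)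
    (hω : 3 ≤ #{v | SameRedClique G red r v}) {b m : V} (hb : ¬ red b) (hm : red m) (p : Prop) :
    {v | SameRedClique G red m v ∧ (G.Adj b v ↔ p)}.Infinite := by
  obtain ⟨c, u, hc, hu, hcu⟩ := exists_splits_of_not_isBlowUpOf hU hR hG hr
    ((by norm_num : (2 : Cardinal) ≤ 3).trans hω)
  exact hU.infinite_setOf_adj_iff hR hα (fun v hv => hU.mk_setOf_sameRedClique_eq hr hv ▸ hω) hb hm
    (fun v hv => hU.splits_of_splits hR hc hb hu hv hcu) p

theorem mk_setOf_sameRedClique_eq_one_or_two_or_aleph0 {r : V} (hr : red r) :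
    #{v | SameRedClique G red r v} = 1 ∨ #{v | SameRedClique G red r v} = 2 ∨
      #{v | SameRedClique G red r v} = ℵ₀ := by
  rcases lt_or_ge #{v | SameRedClique G red r v} 3 with hlt | hge
  · obtain ⟨n, hn⟩ := lt_aleph0.1 (hlt.trans (natCast_lt_aleph0 (n := 3)))
    have hpos : #{v | SameRedClique G red r v} ≠ 0 :=
      mk_ne_zero_iff.2 ⟨r, SameRedClique.refl r⟩
    rw [hn] at hlt hpos ⊢
    norm_cast at hlt hpos ⊢
    omega
  · obtain ⟨b, u, hb, -⟩ := exists_splits_of_not_isBlowUpOf hU hR hG hr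
      ((by norm_num : (2 : Cardinal) ≤ 3).trans hge)
    have hinf := infinite_setOf_adj_iff_of_not_isBlowUpOf hU hR hG hα hr hge hb hr True
    have : Infinite {v | SameRedClique G red r v} := (hinf.mono fun v hv => hv.1).to_subtype
    exact Or.inr (Or.inr (mk_eq_aleph0 _))

theorem exists_infinite_blue_isIndepIn (hD : ¬ Realizes G red Dgraph Dred) {r : V} (hr : red r)
    (hω : 3 ≤ #{v | SameRedClique G red r v}) :
    ∃ S : Set V, S ⊆ {v | ¬ red v} ∧ IsIndepIn G S ∧ S.Infinite := by
  have hinf (b : V) (hb : ¬ red b) (p : Prop) :=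
    infinite_setOf_adj_iff_of_not_isBlowUpOf hU hR hG hα hr hω hb hr p
  obtain ⟨b, -, hb, -⟩ := exists_splits_of_not_isBlowUpOf hU hR hG hr
    ((by norm_num : (2 : Cardinal) ≤ 3).trans hω)
  exact exists_infinite_isIndepIn_of_not_realizes_Dgraph hD (fun v hv => hv.red_iff.1 hr)
    (hR.isClique_setOf_sameRedClique r) ((hinf b hb True).mono fun v hv => hv.1)
    fun S hSr hS p => hU.exists_blue_adj_iff hR hr ⟨b, hb⟩ hinf hS hSr p

end NotBlowUp

end

theorem stmt_12_general {V : Type} [Countable V] (G : SimpleGraph V) (red : V → Prop)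
    (hU : Ultrahomogeneous G red) (hR : IsUnionOfCliques G {v | red v})
    (hG : ¬ IsBlowUpOf G red) (hα : ∃ u v, red u ∧ red v ∧ u ≠ v ∧ ¬ G.Adj u v) :
    ((∀ M : Set V, IsMaxCliqueIn G {v | red v} M → #M = 1) ∨
     (∀ M : Set V, IsMaxCliqueIn G {v | red v} M → #M = 2) ∨
     (∀ M : Set V, IsMaxCliqueIn G {v | red v} M → #M = ℵ₀)) ∧
    ((∀ M : Set V, IsMaxCliqueIn G {v | red v} M → #M = ℵ₀) →
      (¬ Realizes G red Dgraph Dred →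
        ∃ S : Set V, S ⊆ {v | ¬ red v} ∧ IsIndepIn G S ∧ S.Infinite) ∧
      ∀ b, ¬ red b → ∀ M : Set V, IsMaxCliqueIn G {v | red v} M →
        {u | u ∈ M ∧ G.Adj b u}.Infinite ∧ {u | u ∈ M ∧ ¬ G.Adj b u}.Infinite) := by
  obtain ⟨r, -, hr, -⟩ := id hα
  have maxClique_iff {M : Set V} := hR.isMaxCliqueIn_iff ⟨r, hr⟩ (M := M)
  have mk_eq (M : Set V) (hM : IsMaxCliqueIn G {v | red v} M) :
      #M = #{v | SameRedClique G red r v} := by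
    obtain ⟨m, hm, rfl⟩ := maxClique_iff.1 hM
    exact hU.mk_setOf_sameRedClique_eq hm hr
  refine ⟨?_, fun hinf => ?_⟩
  · exact (mk_setOf_sameRedClique_eq_one_or_two_or_aleph0 hU hR hG hα hr).imp
      (fun h M hM => (mk_eq M hM).trans h)
      (Or.imp (fun h M hM => (mk_eq M hM).trans h) fun h M hM => (mk_eq M hM).trans h)
  · have hω : 3 ≤ #{v | SameRedClique G red r v} := by
      rw [hinf _ (maxClique_iff.2 ⟨r, hr, rfl⟩)]
      exact (natCast_lt_aleph0 (n := 3)).le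
    refine ⟨fun hD => exists_infinite_blue_isIndepIn hU hR hG hα hD hr hω, fun b hb M hM => ?_⟩
    obtain ⟨m, hm, rfl⟩ := maxClique_iff.1 hM
    have hinf (p : Prop) := infinite_setOf_adj_iff_of_not_isBlowUpOf hU hR hG hα hr hω hb hm p
    exact ⟨by simpa using hinf True, by simpa using hinf False⟩

/-- in a basic CUH graph omitting `D` with a non-independent color class,
ω_R ∈ {1, 2, ℵ₀}; and if ω_R = ℵ₀ then α_B = ℵ₀ and every blue vertex has infinitely many
neighbors and infinitely many non-neighbors in every maximal red clique. -/
theorem stmt_12 {V : Type} (G : SimpleGraph V) (red : V → Prop)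
    (hG : IsBasicCUH G red)
    (hOmD : ¬ Realizes G red Dgraph Dred)
    (hni : (∃ u v, red u ∧ red v ∧ G.Adj u v) ∨ (∃ u v, ¬ red u ∧ ¬ red v ∧ G.Adj u v)) :
    ((∀ M : Set V, IsMaxCliqueIn G {v | red v} M → Cardinal.mk M = 1) ∨
     (∀ M : Set V, IsMaxCliqueIn G {v | red v} M → Cardinal.mk M = 2) ∨
     (∀ M : Set V, IsMaxCliqueIn G {v | red v} M → Cardinal.mk M = Cardinal.aleph0)) ∧
    ((∀ M : Set V, IsMaxCliqueIn G {v | red v} M → Cardinal.mk M = Cardinal.aleph0) →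
      (∃ S : Set V, S ⊆ {v | ¬ red v} ∧ IsIndepIn G S ∧ S.Infinite) ∧
      ∀ b, ¬ red b → ∀ M : Set V, IsMaxCliqueIn G {v | red v} M →
        {u | u ∈ M ∧ G.Adj b u}.Infinite ∧ {u | u ∈ M ∧ ¬ G.Adj b u}.Infinite) := by
  obtain ⟨⟨_, _, hU, hR, _⟩, hblow, hα, _⟩ := hG
  have h := stmt_12_general G red hU hR (hblow ∘ Or.inl) hα
  exact ⟨h.1, fun hinf => ⟨(h.2 hinf).1 hOmD, (h.2 hinf).2⟩⟩
end
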